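/- arXiv:2307.14820 — 2 statements merged into one kernel-verified Lean document; each statement's English description precedes it below -/
import Mathlib

section
/- Let G be a finite group with property SN and Q a subgroup of G which is not normal in G. (a) If N ≤ Q is a normal subgroup of G, then N is cyclic. (b) If moreover G is a p-group for a prime p, then Q is cyclic, elementary abelian, or isomorphic to the quaternion group Q₈ of order 8; and if additionally there is a non-trivial subgroup N ≤ Q which is normal in G, then Q is cyclic or isomorphic to Q₈. -/
/-- Property SN: for every normal subgroup `N` and every subgroup `Y` of `G`, either
`N ≤ Y` or the product `NY` (which equals `N ⊔ Y` since `N` is normal) is normal in `G`. -/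
def HasSN (G : Type*) [Group G] : Prop :=
  ∀ N : Subgroup G, N.Normal → ∀ Y : Subgroup G, N ≤ Y ∨ (N ⊔ Y).Normal

/-- Property SSN: every subgroup of `G` has SN. -/
def HasSSN (G : Type*) [Group G] : Prop :=
  ∀ H : Subgroup G, HasSN H

/-- A Dedekind group: every subgroup is normal. -/
def IsDedekind (G : Type*) [Group G] : Prop :=
  ∀ H : Subgroup G, H.Normal

/-- A subgroup is elementary abelian for the prime `p`: abelian with every element of
order dividing `p`. -/
def IsElemAbelian (p : ℕ) {G : Type*} [Group G] (P : Subgroup G) : Prop :=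
  (∀ x ∈ P, ∀ y ∈ P, x * y = y * x) ∧ ∀ x ∈ P, x ^ p = 1

/-!
A normal subgroup `N ≤ Q` that is not cyclic lies in no cyclic group, so SN makes `N ⊔ ⟨x⟩` normal
in `G` for every `x ∈ Q`, and `Q` is the union of these subgroups.

Let now `G` be a nilpotent `p`-group, for instance a finite one. If `Q` has trivial core, take `z`
central of order `p`. SN makes each `⟨z⟩⟨y⟩` with `y ∈ Q` normal in `G`. Taking `p`-th powers,
`y ^ p` lies in the core of `Q`; intersecting with `Q`, the subgroup `⟨y⟩` is normal in `Q`. Hence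
`Q` is elementary abelian.

If `Q` has a non-trivial core `N`, the trivial-core case applies to `Q / N` in `G / N`. By SN every
subgroup of `Q` is comparable with `N`, so every `x ∈ Q` outside `N` satisfies `N = ⟨x ^ p⟩`. Thus
`N` is central in `Q` and contains all elements of order `p`. If `u` and `v` lie in `Q` outside `N`,
then some `w = v * u ^ k` satisfies `w ^ p = ⁅u ^ k, v⁆ ^ (p choose 2)`. If `p` is odd this is `1`,
which forces `v ∈ ⟨u⟩`. So a non-abelian `Q` has `p = 2` and `|N| = 2`, all its elements outside `N`
have the same square, and each of them generates its own centralizer: this is `Q₈`.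
-/

open Subgroup
open scoped commutatorElement

section Group

variable {G : Type*} [Group G]

theorem commute_of_mem_zpowers {w a b : G} (ha : a ∈ zpowers w) (hb : b ∈ zpowers w) :
    Commute a b := by
  obtain ⟨i, rfl⟩ := mem_zpowers_iff.1 ha
  obtain ⟨j, rfl⟩ := mem_zpowers_iff.1 hb
  exact (Commute.refl w).zpow_zpow i j

theorem mem_or_dvd_of_zpow_mem {p : ℕ} (hp : p.Prime) {H : Subgroup G} {x : G} {i : ℤ}
    (hxp : x ^ p ∈ H) (hxi : x ^ i ∈ H) : x ∈ H ∨ (p : ℤ) ∣ i := by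
  refine or_iff_not_imp_right.2 fun hi ↦ ?_
  obtain ⟨a, b, hab⟩ := (Nat.prime_iff_prime_int.1 hp).coprime_iff_not_dvd.2 hi
  have hx : x = (x ^ p) ^ a * (x ^ i) ^ b := by
    rw [← zpow_natCast, ← zpow_mul, ← zpow_mul, ← zpow_add, mul_comm (p : ℤ), mul_comm i, hab,
      zpow_one]
  rw [hx]
  exact mul_mem (zpow_mem hxp a) (zpow_mem hxi b)

theorem commute_of_conj_mem_zpowers {p : ℕ} (hp : p.Prime) {x y : G} (hx : x ^ p = 1)
    (hxy : x * y * x⁻¹ ∈ zpowers y) (hyx : y * x * y⁻¹ ∈ zpowers x) : Commute x y := by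
  have hcy : ⁅x, y⁆ ∈ zpowers y := mul_mem hxy (inv_mem (mem_zpowers y))
  have hcx : ⁅x, y⁆ ∈ zpowers x := by
    rw [← commutatorElement_inv]
    exact inv_mem (mul_mem hyx (inv_mem (mem_zpowers x)))
  obtain ⟨i, hi⟩ := mem_zpowers_iff.1 hcx
  have hxp : x ^ p ∈ zpowers ⁅x, y⁆ := hx ▸ one_mem _
  have hxi : x ^ i ∈ zpowers ⁅x, y⁆ := hi.symm ▸ mem_zpowers _
  rcases mem_or_dvd_of_zpow_mem hp hxp hxi with hxc | ⟨j, rfl⟩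
  · exact commute_of_mem_zpowers (zpowers_le.2 hcy hxc) (mem_zpowers y)
  · rw [← commutatorElement_eq_one_iff_commute, ← hi, zpow_mul, zpow_natCast, hx, one_zpow]

theorem commutatorElement_pow_left {a b : G} (h : Commute ⁅a, b⁆ a) (n : ℕ) :
    ⁅a ^ n, b⁆ = ⁅a, b⁆ ^ n := by
  have hconj : b * a * b⁻¹ = ⁅a, b⁆⁻¹ * a := by
    rw [commutatorElement_def]
    group
  calc ⁅a ^ n, b⁆ = a ^ n * ((b * a * b⁻¹) ^ n)⁻¹ := by
        rw [conj_pow, commutatorElement_def]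
        group
    _ = ⁅a, b⁆ ^ n := by
        rw [hconj, h.inv_left.mul_pow, mul_inv_rev, inv_pow, inv_inv, mul_inv_cancel_left]

theorem mul_pow_eq_mul_commutatorElement_pow_choose {a b : G} (ha : Commute ⁅b, a⁆ a)
    (hb : Commute ⁅b, a⁆ b) (n : ℕ) :
    (a * b) ^ n = a ^ n * b ^ n * ⁅b, a⁆ ^ n.choose 2 := by
  induction n with
  | zero => simp
  | succ n ih =>
    have hba : b ^ n * a = ⁅b, a⁆ ^ n * (a * b ^ n) := by
      rw [← commutatorElement_pow_left hb, commutatorElement_def]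
      group
    have hd : Commute (⁅b, a⁆ ^ n.choose 2) (a * b) := (ha.mul_right hb).pow_left _
    have hdn : Commute (⁅b, a⁆ ^ n) (a * b ^ n * b) :=
      ((ha.mul_right (hb.pow_right n)).mul_right hb).pow_left n
    calc (a * b) ^ (n + 1) = a ^ n * b ^ n * (⁅b, a⁆ ^ n.choose 2 * (a * b)) := by
          rw [pow_succ, ih, mul_assoc]
      _ = a ^ n * (b ^ n * a * b) * ⁅b, a⁆ ^ n.choose 2 := by
          rw [hd.eq]
          simp only [mul_assoc]
      _ = a ^ n * (⁅b, a⁆ ^ n * (a * b ^ n * b)) * ⁅b, a⁆ ^ n.choose 2 := by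
          rw [hba]
          simp only [mul_assoc]
      _ = a ^ (n + 1) * b ^ (n + 1) * (⁅b, a⁆ ^ n * ⁅b, a⁆ ^ n.choose 2) := by
          rw [hdn.eq, pow_succ a n, pow_succ b n]
          simp only [mul_assoc]
      _ = a ^ (n + 1) * b ^ (n + 1) * ⁅b, a⁆ ^ (n + 1).choose 2 := by
          rw [show (n + 1).choose 2 = n + n.choose 2 by simp [Nat.choose_succ_succ' n 1],
            pow_add ⁅b, a⁆]

theorem normalCore_comap {G' : Type*} [Group G'] {f : G →* G'} (hf : Function.Surjective f)
    (H : Subgroup G') : (H.comap f).normalCore = H.normalCore.comap f := by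
  ext x
  change (∀ b, f (b * x * b⁻¹) ∈ H) ↔ ∀ b, b * f x * b⁻¹ ∈ H
  simp only [map_mul, map_inv, hf.forall]

theorem normalCore_map_mk'_normalCore (H : Subgroup G) :
    (H.map (QuotientGroup.mk' H.normalCore)).normalCore = ⊥ := by
  have hs := QuotientGroup.mk'_surjective H.normalCore
  have hker : (QuotientGroup.mk' H.normalCore).ker = H.normalCore := QuotientGroup.ker_mk' _
  apply comap_injective hs
  rw [← normalCore_comap hs, comap_map_eq_self (hker.trans_le H.normalCore_le),
    MonoidHom.comap_bot, hker]

theorem normal_of_le_center {H : Subgroup G} (hH : H ≤ center G) : H.Normal :=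
  ⟨fun h hh g ↦ by rwa [mem_center_iff.1 (hH hh) g, mul_inv_cancel_right]⟩

theorem mem_normalCore_of_mem_center {H : Subgroup G} {z : G} (hz : z ∈ center G) (hzH : z ∈ H) :
    z ∈ H.normalCore :=
  fun g ↦ by rwa [mem_center_iff.1 hz g, mul_inv_cancel_right]

theorem exists_mem_center_orderOf_eq_prime [Group.IsNilpotent G] [Nontrivial G] {p : ℕ}
    (hp : p.Prime) (hG : IsPGroup p G) : ∃ z ∈ center G, orderOf z = p := by
  have : Fact p.Prime := ⟨hp⟩
  have : Nontrivial (center G) := nontrivial_iff_ne_bot _ |>.2 (Group.IsNilpotent.center_ne_bot G)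
  obtain ⟨c, hc, hc1⟩ := (center G).exists_ne_one_of_nontrivial
  have hc0 : orderOf c ≠ 0 := (hG.isOfFinOrder hp.ne_zero c).orderOf_pos.ne'
  exact ⟨c ^ (orderOf c / p), pow_mem hc _, orderOf_pow_orderOf_div hc0 (hG.dvd_orderOf hc1)⟩

theorem eq_of_mem_of_card_eq_two {N : Subgroup G} (hN : Nat.card N = 2) {x y : G} (hx : x ∈ N)
    (hy : y ∈ N) (hx1 : x ≠ 1) (hy1 : y ≠ 1) : x = y := by
  have hxy : (⟨x, hx⟩ : N) = ⟨y, hy⟩ :=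
    ((Nat.card_eq_two_iff' 1).1 hN).unique (by simpa using hx1) (by simpa using hy1)
  exact congrArg Subtype.val hxy

theorem commute_inv_mul_of_commutatorElement_eq {u v t : G} (h : ⁅u, v⁆ = ⁅u, t⁆) :
    Commute u (v⁻¹ * t) := by
  have hconj : u * (v⁻¹ * t) * u⁻¹ = v⁻¹ * t := calc
    u * (v⁻¹ * t) * u⁻¹ = (⁅u, v⁆ * v)⁻¹ * (⁅u, t⁆ * t) := by
      simp only [commutatorElement_def]
      group
    _ = v⁻¹ * t := by
      rw [h]
      group
  exact mul_inv_eq_iff_eq_mul.1 hconj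

end Group

section QuaternionGroup

variable {H : Type*} [Group H] {u v : H}

theorem zpow_cast_intCast {m : ℕ} (hu : u ^ m = 1) (k : ℤ) :
    u ^ ((k : ZMod m).cast : ℤ) = u ^ k := by
  rw [ZMod.coe_intCast, ← zpow_eq_zpow_emod k (by rwa [zpow_natCast])]

/-- The homomorphism from the generalized quaternion group sending `a 1` to `u` and `xa 0` to `v`,
given that `u` and `v` satisfy the defining relations. -/
def quaternionGroupLift {n : ℕ} (hu : u ^ (2 * n) = 1) (hv : v ^ 2 = u ^ n)
    (huv : u * v = v * u⁻¹) : QuaternionGroup n →* H :=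
  MonoidHom.mk'
    (fun
      | .a i => u ^ (i.cast : ℤ)
      | .xa i => v * u ^ (i.cast : ℤ))
    (by
      have hconj (k : ℤ) : u ^ k * v = v * u ^ (-k) := by
        rw [← inv_zpow']
        exact (SemiconjBy.zpow_right (a := v) huv.symm k).symm
      rintro (i | i) (j | j) <;> obtain ⟨i, rfl⟩ := ZMod.intCast_surjective i <;>
        obtain ⟨j, rfl⟩ := ZMod.intCast_surjective j
      · simp only [QuaternionGroup.a_mul_a, ← Int.cast_add, zpow_cast_intCast hu, zpow_add]
      · simp only [QuaternionGroup.a_mul_xa, ← Int.cast_sub, zpow_cast_intCast hu]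
        rw [← mul_assoc, hconj, mul_assoc, ← zpow_add, neg_add_eq_sub]
      · simp only [QuaternionGroup.xa_mul_a, ← Int.cast_add, zpow_cast_intCast hu, zpow_add,
          mul_assoc]
      · simp only [QuaternionGroup.xa_mul_xa, ← Int.cast_natCast (R := ZMod (2 * n)) n,
          ← Int.cast_add, ← Int.cast_sub, zpow_cast_intCast hu]
        rw [mul_assoc, ← mul_assoc (u ^ i), hconj, mul_assoc v, ← mul_assoc v, ← sq, hv,
          ← zpow_natCast, ← zpow_add, ← zpow_add, neg_add_eq_sub, add_sub_assoc])

theorem quaternionGroupLift_a {n : ℕ} (hu : u ^ (2 * n) = 1) (hv : v ^ 2 = u ^ n)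
    (huv : u * v = v * u⁻¹) (k : ℤ) : quaternionGroupLift hu hv huv (.a k) = u ^ k :=
  zpow_cast_intCast hu k

theorem quaternionGroupLift_xa {n : ℕ} (hu : u ^ (2 * n) = 1) (hv : v ^ 2 = u ^ n)
    (huv : u * v = v * u⁻¹) (k : ℤ) : quaternionGroupLift hu hv huv (.xa k) = v * u ^ k :=
  congrArg (v * ·) (zpow_cast_intCast hu k)

theorem nonempty_mulEquiv_quaternionGroup {n : ℕ} (hu : orderOf u = 2 * n) (hv : v ^ 2 = u ^ n)
    (huv : u * v = v * u⁻¹) (hvu : v ∉ zpowers u)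
    (hcover : ∀ t, t ∈ zpowers u ∨ v⁻¹ * t ∈ zpowers u) : Nonempty (H ≃* QuaternionGroup n) := by
  have hu1 : u ^ (2 * n) = 1 := hu ▸ pow_orderOf_eq_one u
  refine ⟨(MulEquiv.ofBijective (quaternionGroupLift hu1 hv huv) ⟨?_, fun t ↦ ?_⟩).symm⟩
  · rw [injective_iff_map_eq_one]
    rintro (i | i) hi <;> obtain ⟨k, rfl⟩ := ZMod.intCast_surjective i
    · rw [quaternionGroupLift_a, ← orderOf_dvd_iff_zpow_eq_one, hu,
        ← ZMod.intCast_zmod_eq_zero_iff_dvd] at hi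
      rw [hi, QuaternionGroup.a_zero]
    · rw [quaternionGroupLift_xa, mul_eq_one_iff_eq_inv] at hi
      exact absurd (hi ▸ inv_mem (zpow_mem (mem_zpowers u) k)) hvu
  · rcases hcover t with ht | ht <;> obtain ⟨k, hk⟩ := mem_zpowers_iff.1 ht
    · exact ⟨.a k, by rw [quaternionGroupLift_a, hk]⟩
    · exact ⟨.xa k, by rw [quaternionGroupLift_xa, hk, mul_inv_cancel_left]⟩

end QuaternionGroup

section BreakingPoint

/-- A breaking point of the subgroup lattice: a non-trivial proper subgroup that is comparable with
every subgroup. The non-trivial core of a non-normal subgroup `Q` of a group with property SN is one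
for `Q`. -/
structure IsBreakingPoint {H : Type*} [Group H] (N : Subgroup H) : Prop where
  ne_bot : N ≠ ⊥
  ne_top : N ≠ ⊤
  le_or_ge : ∀ Y : Subgroup H, N ≤ Y ∨ Y ≤ N

namespace IsBreakingPoint

variable {H : Type*} [Group H] {N : Subgroup H} {p : ℕ} {u v x : H}

theorem le_zpowers (hN : IsBreakingPoint N) (hx : x ∉ N) : N ≤ zpowers x :=
  (hN.le_or_ge _).resolve_right fun h ↦ hx (h (mem_zpowers x))

theorem le_center (hN : IsBreakingPoint N) : N ≤ center H := by
  refine fun n hn ↦ mem_center_iff.2 fun g ↦ ?_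
  by_cases hg : g ∈ N
  · obtain ⟨x, -, hx⟩ := SetLike.exists_of_lt hN.ne_top.lt_top
    exact commute_of_mem_zpowers (hN.le_zpowers hx hg) (hN.le_zpowers hx hn)
  · exact commute_of_mem_zpowers (mem_zpowers g) (hN.le_zpowers hg hn)

theorem commute_of_mem (hN : IsBreakingPoint N) {n : H} (hn : n ∈ N) (g : H) : Commute n g :=
  (mem_center_iff.1 (hN.le_center hn) g).symm

theorem le_zpowers_pow (hN : IsBreakingPoint N) (hp : p.Prime) (hxp : x ^ p ∈ N) (hx : x ∉ N) :
    N ≤ zpowers (x ^ p) := by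
  intro n hn
  obtain ⟨i, rfl⟩ := mem_zpowers_iff.1 (hN.le_zpowers hx hn)
  obtain ⟨j, rfl⟩ := (mem_or_dvd_of_zpow_mem hp hxp hn).resolve_left hx
  rw [zpow_mul, zpow_natCast]
  exact zpow_mem (mem_zpowers _) j

theorem mem_of_pow_eq_one (hN : IsBreakingPoint N) (hp : p.Prime) (hx : x ^ p = 1) : x ∈ N := by
  by_contra hxN
  apply hN.ne_bot
  simpa [hx] using hN.le_zpowers_pow hp (hx ▸ N.one_mem) hxN

theorem mem_zpowers_of_mul_zpow_mem (hN : IsBreakingPoint N) (hu : u ∉ N) {k : ℤ}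
    (h : v * u ^ k ∈ N) : v ∈ zpowers u :=
  (mul_mem_cancel_right (zpow_mem (mem_zpowers u) k)).1 (hN.le_zpowers hu h)

theorem exists_pow_mul_zpow_pow_eq_one (hN : IsBreakingPoint N) (hp : p.Prime)
    (hpow : ∀ x, x ^ p ∈ N) (hu : u ∉ N) (v : H) : ∃ k : ℤ, v ^ p * (u ^ k) ^ p = 1 := by
  obtain ⟨k, hk⟩ := mem_zpowers_iff.1 (hN.le_zpowers_pow hp (hpow u) hu (hpow v))
  refine ⟨-k, ?_⟩
  rw [← hk, ← zpow_natCast (u ^ (-k)), zpow_comm, zpow_natCast, ← zpow_add, add_neg_cancel,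
    zpow_zero]

theorem mem_zpowers_of_commute (hN : IsBreakingPoint N) (hp : p.Prime) (hpow : ∀ x, x ^ p ∈ N)
    (hu : u ∉ N) (huv : Commute u v) : v ∈ zpowers u := by
  obtain ⟨k, hk⟩ := hN.exists_pow_mul_zpow_pow_eq_one hp hpow hu v
  rw [← (huv.symm.zpow_right k).mul_pow] at hk
  exact hN.mem_zpowers_of_mul_zpow_mem hu (hN.mem_of_pow_eq_one hp hk)

theorem isCyclic_of_forall_commute (hN : IsBreakingPoint N) (hp : p.Prime)
    (hpow : ∀ x, x ^ p ∈ N) (hcomm : ∀ u v : H, Commute u v) : IsCyclic H := by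
  obtain ⟨x, -, hx⟩ := SetLike.exists_of_lt hN.ne_top.lt_top
  exact ⟨x, fun y ↦ hN.mem_zpowers_of_commute hp hpow hx (hcomm x y)⟩

theorem exists_notMem_pow_eq_pow_choose_two (hN : IsBreakingPoint N) (hp : p.Prime)
    (hpow : ∀ x, x ^ p ∈ N) (hcomm : ∀ x y : H, ⁅x, y⁆ ∈ N) (huv : ¬ Commute u v) :
    ∃ w ∉ N, ∃ d, d ^ p = 1 ∧ w ^ p = d ^ p.choose 2 := by
  have hu : u ∉ N := fun h ↦ huv (hN.commute_of_mem h v)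
  obtain ⟨k, hk⟩ := hN.exists_pow_mul_zpow_pow_eq_one hp hpow hu v
  refine ⟨v * u ^ k, fun h ↦ huv ?_, ⁅u ^ k, v⁆, ?_, ?_⟩
  · exact commute_of_mem_zpowers (mem_zpowers u) (hN.mem_zpowers_of_mul_zpow_mem hu h)
  · rw [← commutatorElement_pow_left (hN.commute_of_mem (hcomm _ _) _),
      commutatorElement_eq_one_iff_commute]
    exact hN.commute_of_mem (hpow _) v
  · rw [mul_pow_eq_mul_commutatorElement_pow_choose (hN.commute_of_mem (hcomm _ _) _)
      (hN.commute_of_mem (hcomm _ _) _), hk, one_mul]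

theorem eq_two_of_not_commute (hN : IsBreakingPoint N) (hp : p.Prime) (hpow : ∀ x, x ^ p ∈ N)
    (hcomm : ∀ x y : H, ⁅x, y⁆ ∈ N) (huv : ¬ Commute u v) : p = 2 := by
  obtain ⟨w, hw, d, hd, hwd⟩ := hN.exists_notMem_pow_eq_pow_choose_two hp hpow hcomm huv
  by_contra hp2
  obtain ⟨j, hj⟩ := hp.dvd_choose_self two_ne_zero (hp.two_le.lt_of_ne' hp2)
  rw [hj, pow_mul, hd, one_pow] at hwd
  exact hw (hN.mem_of_pow_eq_one hp hwd)

theorem card_eq_two_of_not_commute (hN : IsBreakingPoint N) (hpow : ∀ x, x ^ 2 ∈ N)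
    (hcomm : ∀ x y : H, ⁅x, y⁆ ∈ N) (huv : ¬ Commute u v) : Nat.card N = 2 := by
  obtain ⟨w, hw, d, hd, hwd⟩ :=
    hN.exists_notMem_pow_eq_pow_choose_two Nat.prime_two hpow hcomm huv
  rw [Nat.choose_self, pow_one] at hwd
  have hNd : N = zpowers d :=
    (hwd ▸ hN.le_zpowers_pow Nat.prime_two (hpow w) hw).antisymm (zpowers_le.2 (hwd ▸ hpow w))
  have hd1 : d ≠ 1 := fun h ↦ hN.ne_bot (by rw [hNd, h, zpowers_one_eq_bot])
  rw [hNd, Nat.card_zpowers, orderOf_eq_prime hd hd1]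

theorem nonempty_mulEquiv_quaternionGroup_of_not_commute (hN : IsBreakingPoint N)
    (hpow : ∀ x, x ^ 2 ∈ N) (hcomm : ∀ x y : H, ⁅x, y⁆ ∈ N) (huv : ¬ Commute u v) :
    Nonempty (H ≃* QuaternionGroup 2) := by
  have hu : u ∉ N := fun h ↦ huv (hN.commute_of_mem h v)
  have hv : v ∉ N := fun h ↦ huv (hN.commute_of_mem h u).symm
  have hcard : Nat.card N = 2 := hN.card_eq_two_of_not_commute hpow hcomm huv
  have hsq {x : H} (hx : x ∉ N) : x ^ 2 ≠ 1 := mt (hN.mem_of_pow_eq_one Nat.prime_two) hx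
  have hcomm_eq {t : H} (ht : ¬ Commute u t) : ⁅u, t⁆ = u ^ 2 :=
    eq_of_mem_of_card_eq_two hcard (hcomm u t) (hpow u)
      (mt commutatorElement_eq_one_iff_commute.1 ht) (hsq hu)
  have hu4 : u ^ 2 ^ 2 = 1 := by
    rw [sq 2, pow_mul]
    simpa [hcard] using congrArg Subtype.val (pow_card_eq_one' (x := (⟨u ^ 2, hpow u⟩ : N)))
  refine nonempty_mulEquiv_quaternionGroup (u := u) (v := v) ?_ ?_ ?_ ?_ fun t ↦ ?_
  · exact (orderOf_eq_prime_pow (n := 1) (by simpa using hsq hu) hu4).trans (sq 2)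
  · exact eq_of_mem_of_card_eq_two hcard (hpow v) (hpow u) (hsq hv) (hsq hu)
  · apply mul_left_cancel (a := u)
    rw [← mul_assoc, ← sq, ← hcomm_eq huv, commutatorElement_def]
    group
  · exact fun h ↦ huv (commute_of_mem_zpowers (mem_zpowers u) h)
  · by_cases ht : Commute u t
    · exact .inl (hN.mem_zpowers_of_commute Nat.prime_two hpow hu ht)
    · exact .inr (hN.mem_zpowers_of_commute Nat.prime_two hpow hu
        (commute_inv_mul_of_commutatorElement_eq ((hcomm_eq huv).trans (hcomm_eq ht).symm)))

theorem isCyclic_or_nonempty_mulEquiv_quaternionGroup (hN : IsBreakingPoint N) (hp : p.Prime)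
    (hpow : ∀ x, x ^ p ∈ N) (hcomm : ∀ x y : H, ⁅x, y⁆ ∈ N) :
    IsCyclic H ∨ Nonempty (H ≃* QuaternionGroup 2) := by
  by_cases h : ∀ u v : H, Commute u v
  · exact .inl (hN.isCyclic_of_forall_commute hp hpow h)
  · push Not at h
    obtain ⟨u, v, huv⟩ := h
    obtain rfl := hN.eq_two_of_not_commute hp hpow hcomm huv
    exact .inr (hN.nonempty_mulEquiv_quaternionGroup_of_not_commute hpow hcomm huv)

end IsBreakingPoint

end BreakingPoint

namespace HasSN

variable {G : Type*} [Group G] {Q : Subgroup G} {p : ℕ} {x y z : G}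

theorem quotient (hSN : HasSN G) (N : Subgroup G) [N.Normal] : HasSN (G ⧸ N) := by
  intro M hM Y
  have hs := QuotientGroup.mk'_surjective N
  refine (hSN _ (hM.comap (QuotientGroup.mk' N)) (Y.comap (QuotientGroup.mk' N))).imp
    (comap_le_comap_of_surjective hs).1 fun h ↦ ?_
  rw [comap_sup_eq _ _ _ hs] at h
  exact map_comap_eq_self_of_surjective hs (M ⊔ Y) ▸ h.map _ hs

theorem isCyclic_of_normal_of_le (hSN : HasSN G) (hQ : ¬ Q.Normal) {N : Subgroup G}
    (hN : N.Normal) (hNQ : N ≤ Q) : IsCyclic N := by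
  by_contra hcyc
  refine hQ ⟨fun x hx g ↦ ?_⟩
  have hNx : (N ⊔ zpowers x).Normal :=
    (hSN N hN (zpowers x)).resolve_left fun h ↦ hcyc (isCyclic_of_le h)
  exact sup_le hNQ (zpowers_le.2 hx) (hNx.conj_mem x (mem_sup_right (mem_zpowers x)) g)

theorem normalCore_le_or_le_normalCore (hSN : HasSN G) {Y : Subgroup G} (hY : Y ≤ Q) :
    Q.normalCore ≤ Y ∨ Y ≤ Q.normalCore :=
  (hSN _ Q.normalCore_normal Y).imp_right fun h ↦
    le_sup_right.trans ((normal_le_normalCore (hN := h)).2 (sup_le Q.normalCore_le hY))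

theorem isBreakingPoint_normalCore (hSN : HasSN G) (hQ : ¬ Q.Normal) (hcore : Q.normalCore ≠ ⊥) :
    IsBreakingPoint (Q.normalCore.subgroupOf Q) where
  ne_bot h := hcore ((subgroupOf_eq_bot.1 h).eq_bot_of_le Q.normalCore_le)
  ne_top h := hQ ((subgroupOf_eq_top.1 h).antisymm' Q.normalCore_le ▸ Q.normalCore_normal)
  le_or_ge Y := by
    rw [← map_subtype_le_map_subtype, ← map_subtype_le_map_subtype (H := Y),
      subgroupOf_map_subtype, inf_eq_left.2 Q.normalCore_le]
    exact hSN.normalCore_le_or_le_normalCore (map_subtype_le Y)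

theorem exists_conj_eq_zpow_mul_zpow (hSN : HasSN G) (hz : z ∈ center G) (hzQ : z ∉ Q)
    (hy : y ∈ Q) (g : G) : ∃ m k : ℤ, g * y * g⁻¹ = z ^ m * y ^ k := by
  have hzn : (zpowers z).Normal := normal_of_le_center (zpowers_le.2 hz)
  have hzy : (zpowers z ⊔ zpowers y).Normal :=
    (hSN _ hzn _).resolve_left fun h ↦ hzQ (zpowers_le.2 hy (h (mem_zpowers z)))
  obtain ⟨_, ⟨m, rfl⟩, _, ⟨k, rfl⟩, h⟩ :=
    mem_sup_of_normal_left.1 (hzy.conj_mem y (mem_sup_right (mem_zpowers y)) g)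
  exact ⟨m, k, h.symm⟩

theorem pow_mem_normalCore (hSN : HasSN G) (hz : z ∈ center G) (hzQ : z ∉ Q) (hzp : z ^ p = 1)
    (hy : y ∈ Q) : y ^ p ∈ Q.normalCore := by
  intro g
  obtain ⟨m, k, h⟩ := hSN.exists_conj_eq_zpow_mul_zpow hz hzQ hy g
  have hzy : Commute (z ^ m) (y ^ k) := (mem_center_iff.1 (zpow_mem hz m) _).symm
  have hzm : (z ^ m) ^ p = 1 := by rw [← zpow_natCast, zpow_comm, zpow_natCast, hzp, one_zpow]
  rw [← conj_pow, h, hzy.mul_pow, hzm, one_mul]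
  exact pow_mem (zpow_mem hy k) p

theorem conj_mem_zpowers (hSN : HasSN G) (hz : z ∈ center G) (hzQ : z ∉ Q)
    (hcore : Q.normalCore = ⊥) (hx : x ∈ Q) (hy : y ∈ Q) : x * y * x⁻¹ ∈ zpowers y := by
  obtain ⟨m, k, h⟩ := hSN.exists_conj_eq_zpow_mul_zpow hz hzQ hy x
  have hzmQ : z ^ m ∈ Q := by
    rw [← mul_mem_cancel_right (zpow_mem hy k), ← h]
    exact mul_mem (mul_mem hx hy) (inv_mem hx)
  have hzm : z ^ m = 1 := by
    rw [← mem_bot, ← hcore]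
    exact mem_normalCore_of_mem_center (zpow_mem hz m) hzmQ
  rw [h, hzm, one_mul]
  exact zpow_mem (mem_zpowers y) k

theorem isElemAbelian_of_mem_center (hSN : HasSN G) (hcore : Q.normalCore = ⊥) (hp : p.Prime)
    (hz : z ∈ center G) (hzp : orderOf z = p) : IsElemAbelian p Q := by
  have hz1 : z ≠ 1 := fun h ↦ hp.ne_one (by rw [← hzp, h, orderOf_one])
  have hzQ : z ∉ Q := fun h ↦ hz1 (by simpa [hcore] using mem_normalCore_of_mem_center hz h)
  have hpow : ∀ x ∈ Q, x ^ p = 1 := fun x hx ↦ by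
    simpa [hcore] using hSN.pow_mem_normalCore hz hzQ (hzp ▸ pow_orderOf_eq_one z) hx
  exact ⟨fun x hx y hy ↦ commute_of_conj_mem_zpowers hp (hpow x hx)
    (hSN.conj_mem_zpowers hz hzQ hcore hx hy) (hSN.conj_mem_zpowers hz hzQ hcore hy hx), hpow⟩

variable [Group.IsNilpotent G]

theorem isElemAbelian_of_normalCore_eq_bot (hSN : HasSN G) (hp : p.Prime) (hG : IsPGroup p G)
    (hcore : Q.normalCore = ⊥) : IsElemAbelian p Q := by
  rcases subsingleton_or_nontrivial G with _ | _
  · exact ⟨fun _ _ _ _ ↦ Subsingleton.elim _ _, fun _ _ ↦ Subsingleton.elim _ _⟩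
  · obtain ⟨z, hz, hzp⟩ := exists_mem_center_orderOf_eq_prime hp hG
    exact hSN.isElemAbelian_of_mem_center hcore hp hz hzp

theorem isElemAbelian_map_mk'_normalCore (hSN : HasSN G) (hp : p.Prime) (hG : IsPGroup p G)
    (Q : Subgroup G) : IsElemAbelian p (Q.map (QuotientGroup.mk' Q.normalCore)) :=
  (hSN.quotient Q.normalCore).isElemAbelian_of_normalCore_eq_bot hp (hG.to_quotient _)
    (normalCore_map_mk'_normalCore Q)

theorem isCyclic_or_nonempty_mulEquiv_quaternionGroup (hSN : HasSN G) (hp : p.Prime)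
    (hG : IsPGroup p G) (hQ : ¬ Q.Normal) (hcore : Q.normalCore ≠ ⊥) :
    IsCyclic Q ∨ Nonempty (Q ≃* QuaternionGroup 2) := by
  obtain ⟨hcomm, hpow⟩ := hSN.isElemAbelian_map_mk'_normalCore hp hG Q
  refine (hSN.isBreakingPoint_normalCore hQ hcore).isCyclic_or_nonempty_mulEquiv_quaternionGroup hp
    (fun x ↦ ?_) fun x y ↦ ?_
  · rw [mem_subgroupOf, ← QuotientGroup.eq_one_iff]
    exact hpow _ (mem_map_of_mem _ x.2)
  · rw [mem_subgroupOf, ← QuotientGroup.eq_one_iff]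
    exact commutatorElement_eq_one_iff_mul_comm.2
      (hcomm _ (mem_map_of_mem _ x.2) _ (mem_map_of_mem _ y.2))

end HasSN

theorem stmt_5_general {G : Type*} [Group G] (hSN : HasSN G) (Q : Subgroup G) (hQ : ¬ Q.Normal) :
    (∀ N : Subgroup G, N.Normal → N ≤ Q → IsCyclic N) ∧
    (∀ p : ℕ, p.Prime → IsPGroup p G → Group.IsNilpotent G →
      (IsCyclic Q ∨ IsElemAbelian p Q ∨ Nonempty (Q ≃* QuaternionGroup 2)) ∧
      ((∃ N : Subgroup G, N.Normal ∧ N ≤ Q ∧ N ≠ ⊥) →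
        IsCyclic Q ∨ Nonempty (Q ≃* QuaternionGroup 2))) := by
  refine ⟨fun N hN hNQ ↦ hSN.isCyclic_of_normal_of_le hQ hN hNQ, fun p hp hG _ ↦ ⟨?_, ?_⟩⟩
  · by_cases hcore : Q.normalCore = ⊥
    · exact .inr (.inl (hSN.isElemAbelian_of_normalCore_eq_bot hp hG hcore))
    · exact (hSN.isCyclic_or_nonempty_mulEquiv_quaternionGroup hp hG hQ hcore).imp_right .inr
  · rintro ⟨N, hN, hNQ, hN1⟩
    exact hSN.isCyclic_or_nonempty_mulEquiv_quaternionGroup hp hG hQ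
      (ne_bot_of_le_ne_bot hN1 (normal_le_normalCore.2 hNQ))

/-- Let `G` be a finite group with SN and `Q` a non-normal subgroup.  (a) Any normal subgroup
of `G` contained in `Q` is cyclic.  (b) If `G` is a `p`-group, then `Q` is cyclic, elementary
abelian or isomorphic to `Q₈`; and if moreover `Q` contains a non-trivial normal subgroup of
`G`, then `Q` is cyclic or isomorphic to `Q₈`. -/
theorem stmt_5 (G : Type) [Group G] [Finite G] (hSN : HasSN G)
    (Q : Subgroup G) (hQ : ¬ Q.Normal) :
    (∀ N : Subgroup G, N.Normal → N ≤ Q → IsCyclic N) ∧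
    (∀ p : ℕ, p.Prime → IsPGroup p G →
      (IsCyclic Q ∨ IsElemAbelian p Q ∨ Nonempty (Q ≃* QuaternionGroup 2)) ∧
      ((∃ N : Subgroup G, N.Normal ∧ N ≤ Q ∧ N ≠ ⊥) →
        IsCyclic Q ∨ Nonempty (Q ≃* QuaternionGroup 2))) := by
  have ⟨hcyclic, hpgroup⟩ := stmt_5_general hSN Q hQ
  exact ⟨hcyclic, fun p hp hG ↦ have : Fact p.Prime := ⟨hp⟩; hpgroup p hp hG hG.isNilpotent⟩
end

section
/- Let G be a finite 2-group which has property SN but not property SSN. Then every element of order 2 in G is central if and only if G is isomorphic to Q₈ × Q₈, the direct product of two quaternion groups of order 8. -/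
/-!
Suppose all involutions of `G` are central. Failure of SSN produces a subgroup that is neither
normal nor cyclic. By SN it contains only one involution `t`, it misses another central involution
`z`, and so it is Dedekind, hence a quaternion group `⟨i, j⟩`; moreover `1, t, z, tz` are the only
solutions of `w² = 1`, and they form a central subgroup `Ω`. Applying SN to `⟨t⟩` or `⟨z⟩` gives
`g x g⁻¹ ∈ Ω xⁿ` for all `g` and `x`, so `[g, x] ∈ Ω` whenever `x⁴ = 1`. Since none of `⟨i⟩`, `⟨j⟩`,
`⟨ij⟩` is normal, some `h` and `k` satisfy `[h, i] = [k, j] = 1` and `[h, j] = [k, i] = z`.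

The key point is that `G` has exponent `4`. If `k` and `a` have the same order modulo `Ω` and it is
larger than `2`, then their powers of order `4` agree modulo `Ω`, so `ka` has smaller order modulo
`Ω`; descending outside the subgroup inducing inner automorphisms on `⟨i, j⟩` yields an element `y`
outside it with `y² ∈ Ω`. If `x` had order `8`, then `y` could be modified so that `y² = x⁴`, and
`x⁻²y` would be an involution, hence central, although `x²` centralizes `⟨i, j⟩`. Exponent `4`
forces `h² = k² = [h, k] = z` and `C(⟨i, j⟩) = Ω`, whence `⟨h, k⟩` and `⟨ih, jk⟩` are commuting
quaternion groups that generate `G`.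
-/

open Subgroup
open scoped commutatorElement

section CentralInvolutions

variable {G : Type*} [Group G]

/-- The subgroup of all central elements `w` with `w ^ 2 = 1`; when all involutions of a
`2`-group are central it is the subgroup usually denoted `Ω₁`. -/
def centralInvolutions (G : Type*) [Group G] : Subgroup G where
  carrier := {w | w ∈ center G ∧ w ^ 2 = 1}
  one_mem' := ⟨one_mem _, one_pow 2⟩
  mul_mem' := by
    rintro v w ⟨hv, hv2⟩ ⟨hw, hw2⟩
    exact ⟨mul_mem hv hw, by rw [Commute.mul_pow (mem_center_iff.1 hw v), hv2, hw2, one_mul]⟩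
  inv_mem' := by
    rintro w ⟨hw, hw2⟩
    exact ⟨inv_mem hw, by rw [inv_pow, hw2, inv_one]⟩

lemma commute_of_mem_centralInvolutions {w : G} (hw : w ∈ centralInvolutions G) (g : G) :
    Commute w g :=
  (mem_center_iff.1 hw.1 g).symm

lemma mul_self_of_mem_centralInvolutions {w : G} (hw : w ∈ centralInvolutions G) : w * w = 1 :=
  (sq w).symm.trans hw.2

lemma mul_mul_cancel_of_mem_centralInvolutions {w : G} (hw : w ∈ centralInvolutions G) (g : G) :
    w * (g * w) = g := by
  rw [(commute_of_mem_centralInvolutions hw _).eq, mul_assoc,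
    mul_self_of_mem_centralInvolutions hw, mul_one]

lemma pow_four_eq_one_of_sq_mem_centralInvolutions {x : G} (hx : x ^ 2 ∈ centralInvolutions G) :
    x ^ 4 = 1 := by
  rw [show 4 = 2 * 2 from rfl, pow_mul, hx.2]

instance centralInvolutions_normal : (centralInvolutions G).Normal where
  conj_mem w hw g := by rwa [← (commute_of_mem_centralInvolutions hw g).eq, mul_inv_cancel_right]

/-- `CommuteUpTo e a b` says that the commutator of `a` and `b` is the central involution `e`
(or `e = 1`). -/
structure CommuteUpTo (e a b : G) : Prop where
  mem : e ∈ centralInvolutions G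
  eq : a * b = e * (b * a)

namespace CommuteUpTo

variable {e f a b c : G}

lemma of_commute (h : Commute a b) : CommuteUpTo 1 a b :=
  ⟨one_mem _, by rw [one_mul, h.eq]⟩

lemma commute_of_eq_one (h : CommuteUpTo e a b) (he : e = 1) : Commute a b :=
  h.eq.trans (by rw [he, one_mul])

lemma commute (h : CommuteUpTo 1 a b) : Commute a b :=
  h.commute_of_eq_one rfl

lemma of_conj_eq (he : e ∈ centralInvolutions G) (h : a * b * a⁻¹ = e * b) :
    CommuteUpTo e a b :=
  ⟨he, by rw [← mul_assoc, ← h, inv_mul_cancel_right]⟩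

lemma conj_eq (h : CommuteUpTo e a b) : a * b * a⁻¹ = e * b := by
  rw [h.eq, mul_assoc, mul_inv_cancel_right]

lemma of_commutator_mem (h : ⁅a, b⁆ ∈ centralInvolutions G) : CommuteUpTo ⁅a, b⁆ a b :=
  of_conj_eq h (by rw [commutatorElement_def, inv_mul_cancel_right])

lemma symm (h : CommuteUpTo e a b) : CommuteUpTo e b a :=
  ⟨h.mem, by rw [h.eq, ← mul_assoc, mul_self_of_mem_centralInvolutions h.mem, one_mul]⟩

lemma mul_left (ha : CommuteUpTo e a c) (hb : CommuteUpTo f b c) :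
    CommuteUpTo (e * f) (a * b) c :=
  of_conj_eq (mul_mem ha.mem hb.mem) <| calc
    a * b * c * (a * b)⁻¹ = a * (b * c * b⁻¹) * a⁻¹ := by group
    _ = f * (a * c * a⁻¹) := by
      rw [hb.conj_eq, ← mul_assoc, ← (commute_of_mem_centralInvolutions hb.mem a).eq]
      simp only [mul_assoc]
    _ = e * f * c := by
      rw [ha.conj_eq, ← mul_assoc, (commute_of_mem_centralInvolutions hb.mem e).eq]

lemma mul_right (hb : CommuteUpTo e a b) (hc : CommuteUpTo f a c) :
    CommuteUpTo (e * f) a (b * c) :=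
  (hb.symm.mul_left hc.symm).symm

lemma unique (he : CommuteUpTo e a b) (hf : CommuteUpTo f a b) : e = f :=
  mul_right_cancel (he.eq.symm.trans hf.eq)

lemma inv_left (h : CommuteUpTo e a b) : CommuteUpTo e a⁻¹ b := by
  refine of_conj_eq h.mem ?_
  calc a⁻¹ * b * a⁻¹⁻¹ = a⁻¹ * (b * a) := by group
    _ = a⁻¹ * (e * (a * b)) := by rw [h.symm.eq]
    _ = e * b := by rw [← mul_assoc, ← (commute_of_mem_centralInvolutions h.mem a⁻¹).eq]; group

lemma sq_mul (h : CommuteUpTo e a b) : (a * b) ^ 2 = e * (a ^ 2 * b ^ 2) :=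
  calc (a * b) ^ 2 = a * (b * a) * b := by simp only [sq, mul_assoc]
    _ = a * (e * (a * b)) * b := by rw [h.symm.eq]
    _ = e * (a ^ 2 * b ^ 2) := by
      rw [← mul_assoc a, ← (commute_of_mem_centralInvolutions h.mem a).eq]
      simp only [sq, mul_assoc]

lemma commute_sq_left (h : CommuteUpTo e a b) : Commute (a ^ 2) b := by
  rw [sq]
  exact (h.mul_left h).commute_of_eq_one (mul_self_of_mem_centralInvolutions h.mem)

lemma zpow_right (h : CommuteUpTo e a b) (n : ℤ) : CommuteUpTo (e ^ n) a (b ^ n) :=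
  of_conj_eq (zpow_mem h.mem n) <| by
    rw [← conj_zpow, h.conj_eq, (commute_of_mem_centralInvolutions h.mem b).mul_zpow]

lemma ne_one_iff (h : CommuteUpTo e a b) : e ≠ 1 ↔ ¬ Commute a b :=
  not_congr ⟨h.commute_of_eq_one, fun hab ↦ h.unique (of_commute hab)⟩

lemma mul_zpow_right (h : CommuteUpTo e a b) (n : ℤ) : CommuteUpTo e (a * b ^ n) b := by
  simpa only [mul_one] using h.mul_left (of_commute ((Commute.refl b).zpow_left n))

end CommuteUpTo

lemma commutator_sq_eq_one {a b : G} (hb : Commute ⁅a, b⁆ b) (hab : Commute a (b ^ 2)) :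
    ⁅a, b⁆ ^ 2 = 1 := by
  have hconj : a * b * a⁻¹ = ⁅a, b⁆ * b := by rw [commutatorElement_def, inv_mul_cancel_right]
  have hsq : (⁅a, b⁆ * b) ^ 2 = b ^ 2 := by rw [← hconj, conj_pow, hab.eq, mul_inv_cancel_right]
  rwa [hb.mul_pow, mul_eq_right] at hsq

end CentralInvolutions

section TwoGroups

variable {G : Type*} [Group G]

lemma exists_pow_notMem_and_pow_mem {p : ℕ} (hG : IsPGroup p G) {K : Subgroup G} {x : G}
    (hx : x ∉ K) : ∃ k, x ^ p ^ k ∉ K ∧ (x ^ p ^ k) ^ p ∈ K := by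
  classical
  have hK : ∃ k, x ^ p ^ k ∈ K := (hG x).imp fun k hk ↦ by rw [hk]; exact one_mem K
  obtain ⟨k, hk⟩ : ∃ k, Nat.find hK = k + 1 :=
    Nat.exists_eq_succ_of_ne_zero fun h ↦ hx (by simpa [h] using Nat.find_spec hK)
  refine ⟨k, Nat.find_min hK (by lia), ?_⟩
  rw [← pow_mul, ← pow_succ, ← hk]
  exact Nat.find_spec hK

lemma exists_mem_zpowers_pow_eq_one {p : ℕ} (hG : IsPGroup p G) {x : G} (hx : x ≠ 1) :
    ∃ s ∈ zpowers x, s ≠ 1 ∧ s ^ p = 1 := by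
  obtain ⟨k, hk, hk'⟩ := exists_pow_notMem_and_pow_mem hG (mt mem_bot.1 hx)
  exact ⟨_, npow_mem_zpowers x _, mt mem_bot.2 hk, mem_bot.1 hk'⟩

lemma mem_zpowers_zpow_of_odd (hG : IsPGroup 2 G) (x : G) {n : ℤ} (hn : Odd n) :
    x ∈ zpowers (x ^ n) := by
  obtain ⟨k, hk⟩ := IsPGroup.iff_orderOf.1 hG x
  rw [mem_zpowers_zpow_iff, hk, Nat.cast_pow, ← Int.isCoprime_iff_gcd_eq_one]
  exact (Int.isCoprime_two_right.2 hn).pow_right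

lemma mem_zpowers_sq_or_mem_zpowers (hG : IsPGroup 2 G) {x y : G} (h : y ∈ zpowers x) :
    y ∈ zpowers (x ^ 2) ∨ x ∈ zpowers y := by
  obtain ⟨n, rfl⟩ := mem_zpowers_iff.1 h
  obtain ⟨m, rfl | rfl⟩ := Int.even_or_odd' n
  · exact .inl (mem_zpowers_iff.2 ⟨m, by rw [zpow_mul, zpow_ofNat]⟩)
  · exact .inr (mem_zpowers_zpow_of_odd hG x (odd_two_mul_add_one m))

lemma eq_one_or_eq_of_mem_zpowers {s w : G} (hs : s ^ 2 = 1) (hw : w ∈ zpowers s) :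
    w = 1 ∨ w = s := by
  obtain ⟨n, rfl⟩ := mem_zpowers_iff.1 hw
  obtain ⟨m, rfl | rfl⟩ := Int.even_or_odd' n
  · exact .inl (by rw [zpow_mul, zpow_ofNat, hs, one_zpow])
  · exact .inr (by rw [zpow_add, zpow_mul, zpow_ofNat, hs, one_zpow, one_mul, zpow_one])

lemma eq_of_mem_zpowers_of_sq_eq_one (hG : IsPGroup 2 G) {x s t : G} (hs : s ∈ zpowers x)
    (ht : t ∈ zpowers x) (hs1 : s ≠ 1) (ht1 : t ≠ 1) (hs2 : s ^ 2 = 1) (ht2 : t ^ 2 = 1) :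
    s = t := by
  obtain ⟨k, hk⟩ := hG x
  induction k generalizing x with
  | zero => exact absurd (by simpa [show x = 1 by simpa using hk] using hs) hs1
  | succ k ih =>
    obtain hs | hx := mem_zpowers_sq_or_mem_zpowers hG hs
    · obtain ht | hx := mem_zpowers_sq_or_mem_zpowers hG ht
      · exact ih hs ht (by rwa [← pow_mul, ← pow_succ'])
      · exact (eq_one_or_eq_of_mem_zpowers ht2
          (zpowers_le.2 (pow_mem hx 2) hs)).resolve_left hs1
    · exact ((eq_one_or_eq_of_mem_zpowers hs2 (zpowers_le.2 hx ht)).resolve_left ht1).symm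

lemma exists_notMem_pow_mem_commutator_mem [Finite G] {p : ℕ} [Fact p.Prime] (hG : IsPGroup p G)
    {K : Subgroup G} [K.Normal] (hK : K ≠ ⊤) :
    ∃ n ∉ K, n ^ p ∈ K ∧ ∀ g : G, ⁅g, n⁆ ∈ K := by
  have : Nontrivial (G ⧸ K) := QuotientGroup.nontrivial_iff.2 hK
  obtain ⟨c, hc, hc1⟩ := (nontrivial_iff_exists_ne_one _).1 (hG.to_quotient K).center_nontrivial
  obtain ⟨s, hs, hs1, hsp⟩ := exists_mem_zpowers_pow_eq_one (hG.to_quotient K) hc1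
  have hsc : s ∈ center (G ⧸ K) := zpowers_le.2 hc hs
  obtain ⟨n, rfl⟩ := QuotientGroup.mk_surjective s
  refine ⟨n, mt (QuotientGroup.eq_one_iff n).2 hs1, (QuotientGroup.eq_one_iff _).1 hsp, fun g ↦ ?_⟩
  exact (QuotientGroup.eq_one_iff _).1
    (commutatorElement_eq_one_iff_commute.2 (mem_center_iff.1 hsc g))

end TwoGroups

section QuaternionPairs

variable {G : Type*} [Group G]

/-- Congruence version of `CommuteUpTo`: the commutator of `g` and `x` is a central involution
lying in `⟨t⟩`, or trivial. -/
def CommuteMod (t g x : G) : Prop :=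
  ∃ e ∈ zpowers t, CommuteUpTo e g x

namespace CommuteMod

variable {t g g' x y : G}

lemma of_commute (h : Commute g x) : CommuteMod t g x :=
  ⟨1, one_mem _, .of_commute h⟩

lemma symm (h : CommuteMod t g x) : CommuteMod t x g :=
  h.imp fun _ h ↦ ⟨h.1, h.2.symm⟩

lemma mul_left (h : CommuteMod t g x) (h' : CommuteMod t g' x) : CommuteMod t (g * g') x := by
  obtain ⟨e, he, hg⟩ := h
  obtain ⟨f, hf, hg'⟩ := h'
  exact ⟨e * f, mul_mem he hf, hg.mul_left hg'⟩

lemma mul_right (h : CommuteMod t g x) (h' : CommuteMod t g y) : CommuteMod t g (x * y) :=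
  (h.symm.mul_left h'.symm).symm

lemma inv_left (h : CommuteMod t g x) : CommuteMod t g⁻¹ x :=
  h.imp fun _ h ↦ ⟨h.1, h.2.inv_left⟩

lemma mul_left_iff (h : CommuteMod t g' x) : CommuteMod t (g * g') x ↔ CommuteMod t g x :=
  ⟨fun hgg' ↦ by simpa only [mul_inv_cancel_right] using hgg'.mul_left h.inv_left,
    fun hg ↦ hg.mul_left h⟩

end CommuteMod

/-- The subgroup of elements that commute with `a` and with `b` modulo `⟨t⟩`. If `a, b` is a
quaternion pair with central element `t`, these are the elements which act on `⟨a, b⟩` as inner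
automorphisms. -/
def commuteModSubgroup (t a b : G) : Subgroup G where
  carrier := {g | CommuteMod t g a ∧ CommuteMod t g b}
  one_mem' := ⟨.of_commute (.one_left a), .of_commute (.one_left b)⟩
  mul_mem' hg hg' := ⟨hg.1.mul_left hg'.1, hg.2.mul_left hg'.2⟩
  inv_mem' hg := ⟨hg.1.inv_left, hg.2.inv_left⟩

/-- `a` and `b` satisfy the relations of the quaternion group, with central element `u`. -/
structure IsQuaternionPair (u a b : G) : Prop where
  left_sq : a ^ 2 = u
  right_sq : b ^ 2 = u
  commuteUpTo : CommuteUpTo u a b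

namespace IsQuaternionPair

variable {u a b : G}

lemma mem (h : IsQuaternionPair u a b) : u ∈ centralInvolutions G :=
  h.commuteUpTo.mem

lemma symm (h : IsQuaternionPair u a b) : IsQuaternionPair u b a :=
  ⟨h.right_sq, h.left_sq, h.commuteUpTo.symm⟩

lemma mul_left (h : IsQuaternionPair u a b) : IsQuaternionPair u (a * b) a where
  left_sq := by
    rw [h.commuteUpTo.sq_mul, h.left_sq, h.right_sq, mul_self_of_mem_centralInvolutions h.mem,
      mul_one]
  right_sq := h.left_sq
  commuteUpTo := by
    simpa only [one_mul] using (CommuteUpTo.of_commute (Commute.refl a)).mul_left h.commuteUpTo.symm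

lemma exists_commuteUpTo (h : IsQuaternionPair u a b) {e f : G} (he : e ∈ zpowers u)
    (hf : f ∈ zpowers u) : ∃ p ∈ closure {a, b}, CommuteUpTo e p a ∧ CommuteUpTo f p b := by
  have ha : a ∈ closure {a, b} := subset_closure (by simp)
  have hb : b ∈ closure {a, b} := subset_closure (by simp)
  obtain rfl | rfl := eq_one_or_eq_of_mem_zpowers h.mem.2 he <;>
    obtain rfl | rfl := eq_one_or_eq_of_mem_zpowers h.mem.2 hf
  · exact ⟨1, one_mem _, .of_commute (.one_left a), .of_commute (.one_left b)⟩
  · exact ⟨a, ha, .of_commute (.refl a), h.commuteUpTo⟩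
  · exact ⟨b, hb, h.commuteUpTo.symm, .of_commute (.refl b)⟩
  · refine ⟨a * b, mul_mem ha hb, h.mul_left.commuteUpTo, ?_⟩
    simpa only [mul_one] using h.commuteUpTo.mul_left (.of_commute (.refl b))

lemma exists_commute_mul (h : IsQuaternionPair u a b) {g : G} (ha : CommuteMod u g a)
    (hb : CommuteMod u g b) : ∃ p ∈ closure {a, b}, Commute (g * p) a ∧ Commute (g * p) b := by
  obtain ⟨e, he, hga⟩ := ha
  obtain ⟨f, hf, hgb⟩ := hb
  obtain ⟨p, hp, hpa, hpb⟩ := h.exists_commuteUpTo he hf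
  exact ⟨p, hp,
    (hga.mul_left hpa).commute_of_eq_one (mul_self_of_mem_centralInvolutions hga.mem),
    (hgb.mul_left hpb).commute_of_eq_one (mul_self_of_mem_centralInvolutions hgb.mem)⟩

end IsQuaternionPair

end QuaternionPairs

section UniqueInvolution

variable {G : Type*} [Group G]

/-- `t` is the only element of order `2` of the group. -/
structure IsUniqueInvolution (t : G) : Prop where
  ne_one : t ≠ 1
  sq_eq_one : t ^ 2 = 1
  eq_one_or_eq : ∀ w : G, w ^ 2 = 1 → w = 1 ∨ w = t

namespace IsUniqueInvolution

variable {t x y : G}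

lemma mem_centralInvolutions (ht : IsUniqueInvolution t) : t ∈ centralInvolutions G := by
  refine ⟨mem_center_iff.2 fun g ↦ mul_inv_eq_iff_eq_mul.1 ?_, ht.sq_eq_one⟩
  have hsq : (g * t * g⁻¹) ^ 2 = 1 := by rw [conj_pow, ht.sq_eq_one, mul_one, mul_inv_cancel]
  exact (ht.eq_one_or_eq _ hsq).resolve_left (mt conj_eq_one_iff.1 ht.ne_one)

lemma eq_one_or_eq_of_mem (ht : IsUniqueInvolution t) {e : G} (he : e ∈ centralInvolutions G) :
    e = 1 ∨ e = t :=
  ht.eq_one_or_eq e he.2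

lemma mem_centralInvolutions_of_sq_eq_one (ht : IsUniqueInvolution t) {w : G} (hw : w ^ 2 = 1) :
    w ∈ centralInvolutions G := by
  obtain rfl | rfl := ht.eq_one_or_eq w hw
  · exact one_mem _
  · exact ht.mem_centralInvolutions

lemma mem_zpowers_of_ne_one (hG : IsPGroup 2 G) (ht : IsUniqueInvolution t) (hx : x ≠ 1) :
    t ∈ zpowers x := by
  obtain ⟨s, hs, hs1, hs2⟩ := exists_mem_zpowers_pow_eq_one hG hx
  exact (ht.eq_one_or_eq s hs2).resolve_left hs1 ▸ hs

lemma mem_zpowers_or_mem_zpowers (hG : IsPGroup 2 G) (ht : IsUniqueInvolution t)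
    (h : Commute x y) : x ∈ zpowers y ∨ y ∈ zpowers x := by
  obtain ⟨k, hk⟩ := hG x
  induction k generalizing x with
  | zero => exact .inl (by simp [show x = 1 by simpa using hk])
  | succ k ih =>
    obtain hx2 | hy := ih (h.pow_left 2) (by rwa [← pow_mul, ← pow_succ'])
    · obtain ⟨n, hn⟩ := mem_zpowers_iff.1 hx2
      obtain ⟨m, rfl | rfl⟩ := Int.even_or_odd' n
      · have hsq : (x * (y ^ m)⁻¹) ^ 2 = 1 := by
          rw [(h.zpow_right m).inv_right.mul_pow, ← hn, inv_pow, mul_comm 2 m, zpow_mul,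
            zpow_ofNat, mul_inv_cancel]
        obtain hxy | hxy := ht.eq_one_or_eq _ hsq
        · exact .inl (mul_inv_eq_one.1 hxy ▸ zpow_mem_zpowers y m)
        · by_cases hy : y = 1
          · exact .inr (hy ▸ one_mem _)
          · exact .inl (mul_inv_eq_iff_eq_mul.1 hxy ▸
              mul_mem (ht.mem_zpowers_of_ne_one hG hy) (zpow_mem_zpowers y m))
      · refine .inr (zpowers_le.2 (npow_mem_zpowers x 2) (hn ▸ ?_))
        exact mem_zpowers_zpow_of_odd hG y (odd_two_mul_add_one m)
    · exact .inr (zpowers_le.2 (npow_mem_zpowers x 2) hy)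

lemma not_commute (ht : IsUniqueInvolution t) (h : CommuteUpTo t x y) : ¬ Commute x y :=
  h.ne_one_iff.1 ht.ne_one

lemma exists_mul_zpow_sq_eq (hG : IsPGroup 2 G) (ht : IsUniqueInvolution t)
    (h : CommuteUpTo t x y) : ∃ n : ℤ, (x * y ^ n) ^ 2 = t := by
  have hy : y ∉ zpowers (x ^ 2) := fun hy ↦ ht.not_commute h <| by
    obtain ⟨n, rfl⟩ := mem_zpowers_iff.1 hy
    exact ((Commute.refl x).pow_right 2).zpow_right n
  obtain ⟨n, hn⟩ := mem_zpowers_iff.1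
    ((ht.mem_zpowers_or_mem_zpowers hG h.commute_sq_left).resolve_right hy)
  obtain ⟨m, rfl | rfl⟩ := Int.even_or_odd' n
  · have hsq : (x * y ^ (-m)) ^ 2 ∈ centralInvolutions G := by
      rw [(h.zpow_right (-m)).sq_mul, ← hn, ← zpow_ofNat (y ^ (-m)), ← zpow_mul, ← zpow_add,
        show 2 * m + -m * 2 = 0 by ring, zpow_zero, mul_one]
      exact zpow_mem h.mem _
    refine ⟨-m, (ht.eq_one_or_eq_of_mem hsq).resolve_left fun h1 ↦ ?_⟩
    exact ht.not_commute (h.mul_zpow_right (-m))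
      (commute_of_mem_centralInvolutions (ht.mem_centralInvolutions_of_sq_eq_one h1) y)
  · exact absurd (hn ▸ mem_zpowers_zpow_of_odd hG y (odd_two_mul_add_one m)) hy

lemma sq_eq_of_commuteUpTo (hG : IsPGroup 2 G) (ht : IsUniqueInvolution t)
    (h : CommuteUpTo t x y) : y ^ 2 = t := by
  obtain ⟨n, hn⟩ := ht.exists_mul_zpow_sq_eq hG h
  have hxy := h.mul_zpow_right n
  obtain ⟨m, hm⟩ := ht.exists_mul_zpow_sq_eq hG hxy.symm
  have hcancel : t ^ m * t ^ m = 1 :=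
    mul_self_of_mem_centralInvolutions (zpow_mem h.mem m)
  rwa [(hxy.symm.zpow_right m).sq_mul, ← zpow_natCast (_ ^ m), zpow_comm, zpow_natCast, hn,
    ← mul_assoc, (commute_of_mem_centralInvolutions (zpow_mem h.mem m) (y ^ 2)).eq, mul_assoc,
    hcancel, mul_one] at hm

lemma commuteUpTo_commutator (ht : IsUniqueInvolution t) (hc : Commute ⁅x, y⁆ y)
    (h : Commute x (y ^ 2)) : CommuteUpTo ⁅x, y⁆ x y :=
  .of_commutator_mem (ht.mem_centralInvolutions_of_sq_eq_one (commutator_sq_eq_one hc h))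

lemma commuteUpTo_of_commutator_commute (ht : IsUniqueInvolution t) (hc : Commute ⁅x, y⁆ y)
    (h : Commute x (y ^ 2)) (hxy : ¬ Commute x y) : CommuteUpTo t x y := by
  have hc := ht.commuteUpTo_commutator hc h
  exact (ht.eq_one_or_eq_of_mem hc.mem).resolve_left (hc.ne_one_iff.2 hxy) ▸ hc

lemma center_eq_top [Finite G] (hG : IsPGroup 2 G) (ht : IsUniqueInvolution t) {n : G}
    (hn : n ∈ center G) (hnt : n ^ 2 = t) : center G = ⊤ := by
  by_contra hZ
  obtain ⟨x, hx, hx2, hcomm⟩ := exists_notMem_pow_mem_commutator_mem hG hZ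
  obtain ⟨y, hy⟩ : ∃ y, ¬ Commute y x := by
    by_contra! hx'
    exact hx (mem_center_iff.2 hx')
  have hyx : CommuteUpTo t y x := ht.commuteUpTo_of_commutator_commute
    (mem_center_iff.1 (hcomm y) x).symm (mem_center_iff.1 hx2 y) hy
  have hxn : (x * n) ^ 2 = 1 := by
    rw [Commute.mul_pow (mem_center_iff.1 hn x), ht.sq_eq_of_commuteUpTo hG hyx, hnt, ← sq,
      ht.sq_eq_one]
  exact hx ((mul_mem_cancel_right hn).1 (ht.mem_centralInvolutions_of_sq_eq_one hxn).1)

end IsUniqueInvolution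

namespace IsDedekind

variable {t x y : G}

lemma commute_commutator_right (hD : IsDedekind G) (x y : G) : Commute ⁅x, y⁆ y := by
  obtain ⟨n, hn⟩ := mem_zpowers_iff.1 ((hD (zpowers y)).conj_mem y (mem_zpowers y) x)
  rw [commutatorElement_def, ← hn]
  exact ((Commute.refl y).zpow_left n).mul_left (Commute.refl y).inv_left

lemma sq_eq_of_not_commute (hG : IsPGroup 2 G) (ht : IsUniqueInvolution t) (hD : IsDedekind G)
    (h : ¬ Commute x y) : x ^ 2 = t := by
  have hy : y ∉ centralizer {x} := fun hy ↦ h (mem_centralizer_singleton_iff.1 hy).symm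
  obtain ⟨k, hk, hk2⟩ := exists_pow_notMem_and_pow_mem hG hy
  refine ht.sq_eq_of_commuteUpTo hG (.symm <| ht.commuteUpTo_of_commutator_commute
    (hD.commute_commutator_right x (y ^ 2 ^ k)) (mem_centralizer_singleton_iff.1 hk2).symm
    fun hc ↦ hk (mem_centralizer_singleton_iff.2 hc.symm))

lemma isQuaternionPair (hG : IsPGroup 2 G) (ht : IsUniqueInvolution t) (hD : IsDedekind G)
    (h : ¬ Commute x y) : IsQuaternionPair t x y := by
  have hx : x ^ 2 = t := hD.sq_eq_of_not_commute hG ht h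
  have hy : y ^ 2 = t := hD.sq_eq_of_not_commute hG ht (mt Commute.symm h)
  exact ⟨hx, hy, ht.commuteUpTo_of_commutator_commute (hD.commute_commutator_right x y)
    (hy ▸ (commute_of_mem_centralInvolutions ht.mem_centralInvolutions x).symm) h⟩

lemma commuteMod (hG : IsPGroup 2 G) (ht : IsUniqueInvolution t) (hD : IsDedekind G)
    (x y : G) : CommuteMod t x y := by
  by_cases h : Commute x y
  · exact .of_commute h
  · exact ⟨t, mem_zpowers t, (hD.isQuaternionPair hG ht h).commuteUpTo⟩

lemma closure_eq_top (hG : IsPGroup 2 G) (ht : IsUniqueInvolution t) (hD : IsDedekind G)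
    (h : ¬ Commute x y) : closure {x, y} = ⊤ := by
  refine (eq_top_iff' _).2 fun w ↦ ?_
  obtain ⟨p, hp, hx, hy⟩ := (hD.isQuaternionPair hG ht h).exists_commute_mul
    (hD.commuteMod hG ht w x) (hD.commuteMod hG ht w y)
  refine (mul_mem_cancel_right hp).1 ?_
  obtain hwx | hxw := ht.mem_zpowers_or_mem_zpowers hG hx
  · exact zpowers_le.2 (subset_closure (by simp)) hwx
  · obtain ⟨n, rfl⟩ := mem_zpowers_iff.1 hxw
    exact absurd (hy.zpow_left n) h

end IsDedekind

end UniqueInvolution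

section SN

variable {G : Type*} [Group G]

lemma zpowers_normal_of_conj_mem {x : G} (h : ∀ g, g * x * g⁻¹ ∈ zpowers x) :
    (zpowers x).Normal where
  conj_mem y hy g := by
    obtain ⟨n, rfl⟩ := mem_zpowers_iff.1 hy
    exact conj_zpow (i := n) (a := g) (b := x) ▸ zpow_mem (h g) n

lemma HasSN.exists_conj_eq (hSN : HasSN G) {N : Subgroup G} (hN : N.Normal) {x : G}
    (hx : ¬ N ≤ zpowers x) (g : G) : ∃ e ∈ N, ∃ n : ℤ, g * x * g⁻¹ = e * x ^ n := by
  have hsup := (hSN N hN (zpowers x)).resolve_left hx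
  obtain ⟨e, he, y, hy, heq⟩ := mem_sup_of_normal_left.1
    (hsup.conj_mem x (mem_sup_right (mem_zpowers x)) g)
  obtain ⟨n, rfl⟩ := mem_zpowers_iff.1 hy
  exact ⟨e, he, n, heq.symm⟩

namespace IsUniqueInvolution

variable {t n x y : G}

lemma commute_of_commute_sq_eq [Finite G] (hG : IsPGroup 2 G) (ht : IsUniqueInvolution t)
    (hn : n ^ 2 = t) (hx : Commute x n) (hy : Commute y n) : Commute x y := by
  let C := centralizer {n}
  have hxC : x ∈ C := mem_centralizer_singleton_iff.2 hx
  have hyC : y ∈ C := mem_centralizer_singleton_iff.2 hy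
  have hnC : n ∈ C := mem_centralizer_singleton_iff.2 rfl
  have htC : IsUniqueInvolution (⟨n, hnC⟩ ^ 2 : C) := by
    refine ⟨fun h ↦ ht.ne_one ?_, Subtype.ext ?_, fun w hw ↦ ?_⟩
    · exact hn.symm.trans (congrArg Subtype.val h)
    · exact (congrArg (· ^ 2) hn).trans ht.sq_eq_one
    · exact (ht.eq_one_or_eq w (congrArg Subtype.val hw)).imp Subtype.ext
        fun h ↦ Subtype.ext (h.trans hn.symm)
  have hcenter : center C = ⊤ := htC.center_eq_top (hG.to_subgroup C)
    (mem_center_iff.2 fun g ↦ Subtype.ext (mem_centralizer_singleton_iff.1 g.2)) rfl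
  have hyZ : (⟨y, hyC⟩ : C) ∈ center C := hcenter ▸ mem_top _
  exact congrArg Subtype.val (mem_center_iff.1 hyZ ⟨x, hxC⟩)

lemma exists_sq_eq_commuteUpTo [Finite G] (hG : IsPGroup 2 G) (ht : IsUniqueInvolution t)
    (hxy : ¬ Commute x y) : ∃ n, n ^ 2 = t ∧ ∀ g, CommuteUpTo ⁅g, n⁆ g n := by
  have hΩ : centralInvolutions G ≠ ⊤ := fun h ↦
    hxy (commute_of_mem_centralInvolutions (h ▸ mem_top x) y)
  obtain ⟨n, hn, hn2, hcomm⟩ := exists_notMem_pow_mem_commutator_mem hG hΩ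
  refine ⟨n, ?_, fun g ↦ .of_commutator_mem (hcomm g)⟩
  exact (ht.eq_one_or_eq_of_mem hn2).resolve_left fun h ↦
    hn (ht.mem_centralInvolutions_of_sq_eq_one h)

lemma mem_of_commuteUpTo_commutator (hG : IsPGroup 2 G) (ht : IsUniqueInvolution t)
    (hn : n ^ 2 = t) (hcomm : ∀ g, CommuteUpTo ⁅g, n⁆ g n) {W : Subgroup G} (hx : x ∈ W)
    (hy : y ∈ W) (hxy : ¬ Commute x y) : n ∈ W := by
  by_contra hnW
  have hcentral {c : G} (hc : c ∈ W) (hcn : Commute c n) : c ∈ centralInvolutions G := by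
    have hnc : n ∉ zpowers c := fun h ↦ hnW (zpowers_le.2 hc h)
    have hc := (ht.mem_zpowers_or_mem_zpowers hG hcn).resolve_right hnc
    have hct := (mem_zpowers_sq_or_mem_zpowers hG hc).resolve_right hnc
    exact zpowers_le.2 ht.mem_centralInvolutions (hn ▸ hct)
  have hcommutator {c : G} (hc : c ∈ W) (hcΩ : c ∉ centralInvolutions G) :
      CommuteUpTo t c n :=
    (ht.eq_one_or_eq_of_mem (hcomm c).mem).resolve_left
      ((hcomm c).ne_one_iff.2 (mt (hcentral hc) hcΩ)) ▸ hcomm c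
  have hxn := hcommutator hx fun h ↦ hxy (commute_of_mem_centralInvolutions h y)
  have hyn := hcommutator hy fun h ↦ hxy (commute_of_mem_centralInvolutions h x).symm
  have hcomm_xy : Commute (x * y) n := (hxn.mul_left hyn).commute_of_eq_one
    (mul_self_of_mem_centralInvolutions ht.mem_centralInvolutions)
  have hxy_central := commute_of_mem_centralInvolutions (hcentral (mul_mem hx hy) hcomm_xy) x
  have hyx := (Commute.refl x).inv_left.mul_left hxy_central
  rw [inv_mul_cancel_left] at hyx
  exact hxy hyx.symm

lemma normal_of_not_commute [Finite G] (hG : IsPGroup 2 G) (hSN : HasSN G)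
    (ht : IsUniqueInvolution t) {W : Subgroup G} (hx : x ∈ W) (hy : y ∈ W)
    (hxy : ¬ Commute x y) : W.Normal := by
  obtain ⟨n, hn, hcomm⟩ := ht.exists_sq_eq_commuteUpTo hG hxy
  have hnW := ht.mem_of_commuteUpTo_commutator hG hn hcomm hx hy hxy
  have hnormal : (zpowers n).Normal := zpowers_normal_of_conj_mem fun g ↦ by
    rw [(hcomm g).conj_eq]
    refine mul_mem ?_ (mem_zpowers n)
    obtain h | h := ht.eq_one_or_eq_of_mem (hcomm g).mem
    · exact h ▸ one_mem _
    · exact h ▸ hn ▸ npow_mem_zpowers n 2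
  have hconj {w : G} (hw : w ∈ W) (hwn : ¬ Commute w n) (g : G) : g * w * g⁻¹ ∈ W := by
    have hnw : ¬ zpowers n ≤ zpowers w := fun h ↦ by
      obtain ⟨k, rfl⟩ := mem_zpowers_iff.1 (h (mem_zpowers n))
      exact hwn ((Commute.refl w).zpow_right k)
    obtain ⟨e, he, k, hk⟩ := hSN.exists_conj_eq hnormal hnw g
    exact hk ▸ mul_mem (zpowers_le.2 hnW he) (zpow_mem hw k)
  obtain ⟨v, hv, hvn⟩ : ∃ v ∈ W, ¬ Commute v n := by
    by_contra! h
    exact hxy (ht.commute_of_commute_sq_eq hG hn (h x hx) (h y hy))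
  refine ⟨fun w hw g ↦ ?_⟩
  by_cases hwn : Commute w n
  · have hwvn : ¬ Commute (w * v) n := fun h ↦ hvn (by simpa using hwn.inv_left.mul_left h)
    have hmul := mul_mem (hconj (mul_mem hw hv) hwvn g) (inv_mem (hconj hv hvn g))
    rwa [conj_inv, conj_mul, mul_inv_cancel_right] at hmul
  · exact hconj hw hwn g

end IsUniqueInvolution

end SN

section Reduction

variable {G : Type*} [Group G]

lemma exists_not_normal_of_not_hasSSN (h : ¬ HasSSN G) :
    ∃ W : Subgroup G, ¬ W.Normal ∧ ∃ x ∈ W, ∃ y ∈ W, x ∉ zpowers y ∧ y ∉ zpowers x := by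
  unfold HasSSN HasSN at h
  push Not at h
  obtain ⟨L, N, hN, Y, hNY, hsup⟩ := h
  have hYN : ¬ Y ≤ N := fun h ↦ hsup (by rwa [sup_of_le_left h])
  obtain ⟨x, hxN, hxY⟩ := SetLike.not_le_iff_exists.1 hNY
  obtain ⟨y, hyY, hyN⟩ := SetLike.not_le_iff_exists.1 hYN
  refine ⟨(N ⊔ Y).map L.subtype, fun hW ↦ hsup ?_, x, ?_, y, ?_, fun hxy ↦ hxY ?_, fun hyx ↦ hyN ?_⟩
  · rw [← comap_map_eq_self_of_injective L.subtype_injective (N ⊔ Y)]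
    exact hW.comap L.subtype
  · exact mem_map_of_mem _ (mem_sup_left hxN)
  · exact mem_map_of_mem _ (mem_sup_right hyY)
  · obtain ⟨n, hn⟩ := mem_zpowers_iff.1 hxy
    exact (Subtype.ext hn : y ^ n = x) ▸ zpow_mem hyY n
  · obtain ⟨n, hn⟩ := mem_zpowers_iff.1 hyx
    exact (Subtype.ext hn : x ^ n = y) ▸ zpow_mem hxN n

lemma isDedekind_of_conj_mem_zpowers (h : ∀ x g : G, g * x * g⁻¹ ∈ zpowers x) : IsDedekind G :=
  fun _ ↦ ⟨fun x hx g ↦ zpowers_le.2 hx (h x g)⟩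

namespace HasSN

variable {s t z : G} {W : Subgroup G}

lemma exists_conj_eq_of_notMem_zpowers (hSN : HasSN G) (hs : s ∈ centralInvolutions G) {x : G}
    (hx : s ∉ zpowers x) (g : G) : ∃ e ∈ zpowers s, ∃ n : ℤ, g * x * g⁻¹ = e * x ^ n := by
  refine hSN.exists_conj_eq (zpowers_normal_of_conj_mem fun g ↦ ?_)
    (fun h ↦ hx (h (mem_zpowers s))) g
  rw [← (commute_of_mem_centralInvolutions hs g).eq, mul_inv_cancel_right]
  exact mem_zpowers s

lemma normal_of_mem_centralInvolutions (hSN : HasSN G) (hG : IsPGroup 2 G) (hsW : s ∈ W)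
    (htW : t ∈ W) (hs : s ∈ centralInvolutions G) (ht : t ∈ centralInvolutions G) (hs1 : s ≠ 1)
    (ht1 : t ≠ 1) (hst : s ≠ t) : W.Normal := by
  have hconj {u x : G} (huW : u ∈ W) (hu : u ∈ centralInvolutions G) (hx : x ∈ W)
      (hux : u ∉ zpowers x) (g : G) : g * x * g⁻¹ ∈ W := by
    obtain ⟨e, he, n, hn⟩ := hSN.exists_conj_eq_of_notMem_zpowers hu hux g
    exact hn ▸ mul_mem (zpowers_le.2 huW he) (zpow_mem hx n)
  refine ⟨fun x hx g ↦ ?_⟩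
  by_cases hsx : s ∈ zpowers x
  · exact hconj htW ht hx
      (fun htx ↦ hst (eq_of_mem_zpowers_of_sq_eq_one hG hsx htx hs1 ht1 hs.2 ht.2)) g
  · exact hconj hsW hs hx hsx g

lemma conj_mem_or_conj_eq (hSN : HasSN G) (hz : z ∈ centralInvolutions G) (hzW : z ∉ W) {x : G}
    (hx : x ∈ W) (g : G) :
    g * x * g⁻¹ ∈ zpowers x ∨ ∃ n : ℤ, g * x * g⁻¹ = z * x ^ n := by
  obtain ⟨e, he, n, hn⟩ :=
    hSN.exists_conj_eq_of_notMem_zpowers hz (fun h ↦ hzW (zpowers_le.2 hx h)) g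
  obtain rfl | rfl := eq_one_or_eq_of_mem_zpowers hz.2 he
  · exact .inl (mem_zpowers_iff.2 ⟨n, by rw [hn, one_mul]⟩)
  · exact .inr ⟨n, hn⟩

lemma isDedekind_of_notMem (hSN : HasSN G) (hz : z ∈ centralInvolutions G) (hzW : z ∉ W) :
    IsDedekind W := by
  refine isDedekind_of_conj_mem_zpowers fun x g ↦ ?_
  obtain h | ⟨n, hn⟩ := hSN.conj_mem_or_conj_eq hz hzW x.2 g
  · obtain ⟨n, hn⟩ := mem_zpowers_iff.1 h
    exact mem_zpowers_iff.2 ⟨n, Subtype.ext hn⟩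
  · refine absurd ((mul_mem_cancel_right (zpow_mem x.2 n)).1 ?_) hzW
    exact hn ▸ (g * x * g⁻¹).2

lemma normal_of_notMem_of_mul_notMem (hSN : HasSN G) (hs : s ∈ centralInvolutions G)
    (hz : z ∈ centralInvolutions G) (hsW : s ∉ W) (hzW : z ∉ W) (hzsW : z * s ∉ W) :
    W.Normal := by
  refine ⟨fun x hx g ↦ ?_⟩
  obtain h | ⟨m, hm⟩ := hSN.conj_mem_or_conj_eq hz hzW hx g
  · exact zpowers_le.2 hx h
  obtain h | ⟨n, hn⟩ := hSN.conj_mem_or_conj_eq hs hsW hx g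
  · exact zpowers_le.2 hx h
  have hzs : z * s = x ^ n * (x ^ m)⁻¹ := by
    rw [eq_mul_inv_iff_mul_eq, (commute_of_mem_centralInvolutions hz s).eq, mul_assoc, ← hm, hn,
      ← mul_assoc, mul_self_of_mem_centralInvolutions hs, one_mul]
  exact absurd (hzs ▸ mul_mem (zpow_mem hx n) (inv_mem (zpow_mem hx m))) hzsW

end HasSN

/-- The situation of a `2`-group with SN, central involutions `1, t, z, t * z`, and a quaternion
subgroup `⟨i, j⟩` with centre `⟨t⟩` that is not normal. It is the input for constructing the
isomorphism with `Q₈ × Q₈`. -/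
structure QuaternionConfig (t z i j : G) : Prop where
  isPGroup : IsPGroup 2 G
  hasSN : HasSN G
  z_mem : z ∈ centralInvolutions G
  t_ne_one : t ≠ 1
  z_ne_one : z ≠ 1
  z_ne_t : z ≠ t
  eq_of_sq_eq_one : ∀ w : G, w ^ 2 = 1 → w = 1 ∨ w = t ∨ w = z ∨ w = t * z
  pair : IsQuaternionPair t i j
  not_normal : ¬ (closure {i, j}).Normal

lemma closure_pair_eq_of_closure_eq_top {W : Subgroup G} {x y : W}
    (h : closure {x, y} = ⊤) : closure {(x : G), (y : G)} = W := by
  rw [← Set.image_pair, ← W.coe_subtype, ← MonoidHom.map_closure, h, ← MonoidHom.range_eq_map,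
    range_subtype]

lemma exists_isUniqueInvolution (hG : IsPGroup 2 G) (hSN : HasSN G)
    (hΩ : ∀ w : G, w ^ 2 = 1 → w ∈ centralInvolutions G) {W : Subgroup G} (hW : ¬ W.Normal) :
    ∃ t : W, IsUniqueInvolution t := by
  have hW1 : W ≠ ⊥ := fun h ↦ hW (h ▸ normal_bot)
  obtain ⟨x, hx⟩ := W.ne_bot_iff_exists_ne_one.1 hW1
  obtain ⟨t, -, ht1, ht2⟩ := exists_mem_zpowers_pow_eq_one (hG.to_subgroup W) hx
  refine ⟨t, ht1, ht2, fun w hw ↦ or_iff_not_imp_left.2 fun hw1 ↦ ?_⟩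
  by_contra hwt
  exact hW <| hSN.normal_of_mem_centralInvolutions hG w.2 t.2
    (hΩ w (congrArg Subtype.val hw)) (hΩ t (congrArg Subtype.val ht2))
    (mt OneMemClass.coe_eq_one.1 hw1) (mt OneMemClass.coe_eq_one.1 ht1) (mt Subtype.ext hwt)

lemma IsUniqueInvolution.eq_one_or_eq_of_mem_subgroup {W : Subgroup G} {t : W}
    (ht : IsUniqueInvolution t) {w : G} (hw : w ∈ W) (hw2 : w ^ 2 = 1) : w = 1 ∨ w = t :=
  (ht.eq_one_or_eq ⟨w, hw⟩ (Subtype.ext hw2)).imp (congrArg Subtype.val) (congrArg Subtype.val)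

lemma exists_involution_notMem [Finite G] (hG : IsPGroup 2 G) (hSN : HasSN G)
    (hΩ : ∀ w : G, w ^ 2 = 1 → w ∈ centralInvolutions G) {W : Subgroup G} (hW : ¬ W.Normal)
    {t x y : W} (ht : IsUniqueInvolution t) (hxy : ¬ Commute x y) :
    ∃ z ∈ centralInvolutions G, z ∉ W := by
  by_contra! hle
  have htG : IsUniqueInvolution (t : G) :=
    ⟨mt OneMemClass.coe_eq_one.1 ht.ne_one, congrArg Subtype.val ht.sq_eq_one,
      fun w hw ↦ ht.eq_one_or_eq_of_mem_subgroup (hle w (hΩ w hw)) hw⟩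
  exact hW (htG.normal_of_not_commute hG hSN x.2 y.2 fun h ↦ hxy (Subtype.ext h))

lemma eq_of_sq_eq_one_of_notMem (hSN : HasSN G)
    (hΩ : ∀ w : G, w ^ 2 = 1 → w ∈ centralInvolutions G) {W : Subgroup G} (hW : ¬ W.Normal)
    {t : W} (ht : IsUniqueInvolution t) {z : G} (hz : z ∈ centralInvolutions G) (hzW : z ∉ W)
    {s : G} (hs : s ^ 2 = 1) : s = 1 ∨ s = t ∨ s = z ∨ s = t * z := by
  by_cases hsW : s ∈ W
  · exact (ht.eq_one_or_eq_of_mem_subgroup hsW hs).imp_right .inl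
  · have hzsW : z * s ∈ W := by
      by_contra hzsW
      exact hW (hSN.normal_of_notMem_of_mul_notMem (hΩ s hs) hz hsW hzW hzsW)
    have hs_eq : s = z * s * z := by
      rw [(commute_of_mem_centralInvolutions hz s).eq, mul_assoc,
        mul_self_of_mem_centralInvolutions hz, mul_one]
    obtain h | h := ht.eq_one_or_eq_of_mem_subgroup hzsW (mul_mem hz (hΩ s hs)).2
    · exact .inr (.inr (.inl (by rw [hs_eq, h, one_mul])))
    · exact .inr (.inr (.inr (by rw [hs_eq, h])))

lemma exists_quaternionConfig [Finite G] (hG : IsPGroup 2 G) (hSN : HasSN G)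
    (hΩ : ∀ w : G, w ^ 2 = 1 → w ∈ centralInvolutions G) (hSSN : ¬ HasSSN G) :
    ∃ t z i j : G, QuaternionConfig t z i j := by
  obtain ⟨W, hW, x, hx, y, hy, hxy, hyx⟩ := exists_not_normal_of_not_hasSSN hSSN
  lift x to W using hx
  lift y to W using hy
  obtain ⟨t, ht⟩ := exists_isUniqueInvolution hG hSN hΩ hW
  have hGW := hG.to_subgroup W
  have hcomm : ¬ Commute x y := fun h ↦ (ht.mem_zpowers_or_mem_zpowers hGW h).elim
    (fun h ↦ hxy (by simpa using mem_map_of_mem W.subtype h))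
    (fun h ↦ hyx (by simpa using mem_map_of_mem W.subtype h))
  obtain ⟨z, hz, hzW⟩ := exists_involution_notMem hG hSN hΩ hW ht hcomm
  have hD := hSN.isDedekind_of_notMem hz hzW
  have hpair := hD.isQuaternionPair hGW ht hcomm
  have htΩ := hΩ t (congrArg Subtype.val ht.sq_eq_one)
  have hclosure := closure_pair_eq_of_closure_eq_top (hD.closure_eq_top hGW ht hcomm)
  refine ⟨t, z, x, y, hG, hSN, hz, mt OneMemClass.coe_eq_one.1 ht.ne_one,
    fun h ↦ hzW (h ▸ one_mem W), fun h ↦ hzW (h ▸ t.2), fun s hs ↦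
      eq_of_sq_eq_one_of_notMem hSN hΩ hW ht hz hzW hs,
    ⟨congrArg Subtype.val hpair.left_sq, congrArg Subtype.val hpair.right_sq, htΩ,
      congrArg Subtype.val hpair.commuteUpTo.eq⟩, hclosure.symm ▸ hW⟩

end Reduction

section Configuration

namespace QuaternionConfig

variable {G : Type*} [Group G] {t z i j : G}

lemma t_mem (C : QuaternionConfig t z i j) : t ∈ centralInvolutions G :=
  C.pair.mem

lemma mem_of_sq_eq_one (C : QuaternionConfig t z i j) {w : G} (hw : w ^ 2 = 1) :
    w ∈ centralInvolutions G := by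
  obtain rfl | rfl | rfl | rfl := C.eq_of_sq_eq_one w hw
  exacts [one_mem _, C.t_mem, C.z_mem, mul_mem C.t_mem C.z_mem]

lemma sq_mem_of_pow_four_eq_one (C : QuaternionConfig t z i j) {x : G} (hx : x ^ 4 = 1) :
    x ^ 2 ∈ centralInvolutions G :=
  C.mem_of_sq_eq_one (by rw [← pow_mul, hx])

lemma swap (C : QuaternionConfig t z i j) : QuaternionConfig t z j i :=
  { C with
    pair := C.pair.symm
    not_normal := Set.pair_comm i j ▸ C.not_normal }

lemma mul_left (C : QuaternionConfig t z i j) : QuaternionConfig t z (i * j) i := by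
  have hclosure : closure {i * j, i} = closure {i, j} := by
    refine le_antisymm ((closure_le _).2 ?_) ((closure_le _).2 ?_)
    · have hi : i ∈ closure {i, j} := subset_closure (by simp)
      exact Set.pair_subset (mul_mem hi (subset_closure (by simp))) hi
    · have hi : i ∈ closure {i * j, i} := subset_closure (by simp)
      exact Set.pair_subset hi ((mul_mem_cancel_left hi).1 (subset_closure (by simp)))
  exact { C with
    pair := C.pair.mul_left
    not_normal := hclosure ▸ C.not_normal }

lemma exists_conj_eq (C : QuaternionConfig t z i j) (x g : G) :
    ∃ e ∈ centralInvolutions G, ∃ n : ℤ, g * x * g⁻¹ = e * x ^ n := by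
  have hconj {s : G} (hs : s ∈ centralInvolutions G) (hsx : s ∉ zpowers x) :
      ∃ e ∈ centralInvolutions G, ∃ n : ℤ, g * x * g⁻¹ = e * x ^ n := by
    obtain ⟨e, he, hn⟩ := C.hasSN.exists_conj_eq_of_notMem_zpowers hs hsx g
    exact ⟨e, zpowers_le.2 hs he, hn⟩
  by_cases hz : z ∈ zpowers x
  · exact hconj C.t_mem fun ht ↦ C.z_ne_t
      (eq_of_mem_zpowers_of_sq_eq_one C.isPGroup hz ht C.z_ne_one C.t_ne_one C.z_mem.2 C.t_mem.2)
  · exact hconj C.z_mem hz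

lemma exists_commuteUpTo (C : QuaternionConfig t z i j) {x : G} (hx : x ^ 4 = 1) (g : G) :
    ∃ e, CommuteUpTo e g x := by
  obtain ⟨e, he, n, hn⟩ := C.exists_conj_eq x g
  have hx2 := C.sq_mem_of_pow_four_eq_one hx
  obtain ⟨m, rfl | rfl⟩ := Int.even_or_odd' n
  · rw [zpow_mul, zpow_ofNat] at hn
    have hconj : g * x * g⁻¹ ∈ centralInvolutions G := hn ▸ mul_mem he (zpow_mem hx2 m)
    have hxΩ : x ∈ centralInvolutions G := by
      simpa [mul_assoc] using centralInvolutions_normal.conj_mem _ hconj g⁻¹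
    exact ⟨1, .of_commute (commute_of_mem_centralInvolutions hxΩ g).symm⟩
  · refine ⟨e * (x ^ 2) ^ m, .of_conj_eq (mul_mem he (zpow_mem hx2 m)) ?_⟩
    rw [hn, zpow_add, zpow_mul, zpow_ofNat, zpow_one, mul_assoc]

lemma commute_sq (C : QuaternionConfig t z i j) {x : G} (hx : x ^ 4 = 1) (g : G) :
    Commute (g ^ 2) x :=
  let ⟨_, he⟩ := C.exists_commuteUpTo hx g
  he.commute_sq_left

lemma not_commuteMod (C : QuaternionConfig t z i j) {g x : G} (h : CommuteUpTo z g x) :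
    ¬ CommuteMod t g x := by
  rintro ⟨e, he, hgx⟩
  obtain rfl := hgx.unique h
  exact (eq_one_or_eq_of_mem_zpowers C.t_mem.2 he).elim C.z_ne_one C.z_ne_t

lemma exists_mul_of_not_commuteMod (C : QuaternionConfig t z i j) {g x : G} (hx : x ^ 4 = 1)
    (h : ¬ CommuteMod t g x) : ∃ e ∈ zpowers t, CommuteUpTo (z * e) g x := by
  obtain ⟨e, he⟩ := C.exists_commuteUpTo hx g
  obtain rfl | rfl | rfl | rfl := C.eq_of_sq_eq_one e he.mem.2
  · exact absurd ⟨1, one_mem _, he⟩ h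
  · exact absurd ⟨e, mem_zpowers e, he⟩ h
  · exact ⟨1, one_mem _, by rwa [mul_one]⟩
  · exact ⟨t, mem_zpowers t, (commute_of_mem_centralInvolutions C.t_mem z).eq ▸ he⟩

lemma commuteMod_mul_of_commuteUpTo (C : QuaternionConfig t z i j) {e f g g' x : G}
    (he : e ∈ zpowers t) (hf : f ∈ zpowers t) (hg : CommuteUpTo (z * e) g x)
    (hg' : CommuteUpTo (z * f) g' x) : CommuteMod t (g * g') x := by
  refine ⟨e * f, mul_mem he hf, ?_⟩
  have hz : z * e * (z * f) = e * f := by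
    rw [(commute_of_mem_centralInvolutions C.z_mem e).eq, mul_assoc, ← mul_assoc z,
      mul_self_of_mem_centralInvolutions C.z_mem, one_mul]
  exact hz ▸ hg.mul_left hg'

lemma commuteMod_mul (C : QuaternionConfig t z i j) {g g' x : G} (hx : x ^ 4 = 1)
    (hg : ¬ CommuteMod t g x) (hg' : ¬ CommuteMod t g' x) : CommuteMod t (g * g') x :=
  let ⟨_, he, hge⟩ := C.exists_mul_of_not_commuteMod hx hg
  let ⟨_, hf, hgf⟩ := C.exists_mul_of_not_commuteMod hx hg'
  C.commuteMod_mul_of_commuteUpTo he hf hge hgf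

lemma commuteMod_mul_right (C : QuaternionConfig t z i j) {g x y : G} (hx4 : x ^ 4 = 1)
    (hy4 : y ^ 4 = 1) (hx : ¬ CommuteMod t g x) (hy : ¬ CommuteMod t g y) :
    CommuteMod t g (x * y) :=
  let ⟨_, he, hge⟩ := C.exists_mul_of_not_commuteMod hx4 hx
  let ⟨_, hf, hgf⟩ := C.exists_mul_of_not_commuteMod hy4 hy
  (C.commuteMod_mul_of_commuteUpTo he hf hge.symm hgf.symm).symm

lemma left_pow_four (C : QuaternionConfig t z i j) : i ^ 4 = 1 :=
  pow_four_eq_one_of_sq_mem_centralInvolutions (C.pair.left_sq ▸ C.t_mem)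

lemma right_pow_four (C : QuaternionConfig t z i j) : j ^ 4 = 1 :=
  C.swap.left_pow_four

lemma not_commute (C : QuaternionConfig t z i j) : ¬ Commute i j :=
  C.pair.commuteUpTo.ne_one_iff.1 C.t_ne_one

lemma exists_not_commuteMod (C : QuaternionConfig t z i j) : ∃ g, ¬ CommuteMod t g i := by
  by_contra! h
  have hnormal : (zpowers i).Normal := zpowers_normal_of_conj_mem fun g ↦ by
    obtain ⟨e, he, hg⟩ := h g
    have hti : t ∈ zpowers i := C.pair.left_sq ▸ npow_mem_zpowers i 2
    exact hg.conj_eq ▸ mul_mem (zpowers_le.2 hti he) (mem_zpowers i)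
  obtain hle | hsup := C.hasSN (zpowers i) hnormal (zpowers j)
  · obtain ⟨n, rfl⟩ := mem_zpowers_iff.1 (zpowers_le.1 hle)
    exact C.not_commute ((Commute.refl j).zpow_left n)
  · rw [zpowers_eq_closure, zpowers_eq_closure, ← Subgroup.closure_union,
      Set.singleton_union] at hsup
    exact C.not_normal hsup

lemma exists_commuteMod_and_not_commuteMod (C : QuaternionConfig t z i j) :
    ∃ g, CommuteMod t g i ∧ ¬ CommuteMod t g j := by
  obtain ⟨g, hg⟩ := C.mul_left.exists_not_commuteMod
  obtain ⟨g', hg'⟩ := C.swap.exists_not_commuteMod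
  by_cases hgi : CommuteMod t g i
  · exact ⟨g, hgi, fun hgj ↦ hg (hgi.mul_right hgj)⟩
  have hgj : CommuteMod t g j := by
    by_contra hgj
    exact hg (C.commuteMod_mul_right C.left_pow_four C.right_pow_four hgi hgj)
  by_cases hgi' : CommuteMod t g' i
  · exact ⟨g', hgi', hg'⟩
  · exact ⟨g' * g, C.commuteMod_mul C.left_pow_four hgi' hgi, mt hgj.mul_left_iff.1 hg'⟩

lemma exists_commute_and_commuteUpTo (C : QuaternionConfig t z i j) :
    ∃ h, Commute h i ∧ CommuteUpTo z h j := by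
  obtain ⟨g, ⟨e, he, hgi⟩, hgj⟩ := C.exists_commuteMod_and_not_commuteMod
  obtain ⟨f, hf, hgj⟩ := C.exists_mul_of_not_commuteMod C.right_pow_four hgj
  obtain ⟨p, -, hpi, hpj⟩ := C.pair.exists_commuteUpTo he hf
  refine ⟨g * p, (hgi.mul_left hpi).commute_of_eq_one (mul_self_of_mem_centralInvolutions hgi.mem),
    ?_⟩
  simpa only [mul_assoc, mul_self_of_mem_centralInvolutions hpj.mem, mul_one]
    using hgj.mul_left hpj

end QuaternionConfig

end Configuration

section ExponentFour

variable {G : Type*} [Group G]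

lemma exists_odd_mul_pow_two_pow_eq {k a : G} {u : ℤ} (h : k⁻¹ * a * k = a ^ (4 * u + 1)) (n : ℕ) :
    ∃ s : ℤ, Odd s ∧ (k * a) ^ 2 ^ n = k ^ 2 ^ n * (a ^ 2 ^ n) ^ s := by
  induction n generalizing k a u with
  | zero => exact ⟨1, odd_one, by simp⟩
  | succ n ih =>
    have hconj (m : ℤ) : k⁻¹ * a ^ m * k = a ^ ((4 * u + 1) * m) := by
      simpa [h, zpow_mul] using (conj_zpow (i := m) (a := k⁻¹) (b := a)).symm
    have hsq : (k * a) ^ 2 = k ^ 2 * a ^ (4 * u + 2) :=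
      calc (k * a) ^ 2 = k ^ 2 * (k⁻¹ * a * k * a) := by simp only [sq]; group
        _ = k ^ 2 * a ^ (4 * u + 2) := by rw [h, ← zpow_add_one]; ring_nf
    have hconj_sq : (k ^ 2)⁻¹ * a ^ (4 * u + 2) * k ^ 2 =
        (a ^ (4 * u + 2)) ^ (4 * (4 * u ^ 2 + 2 * u) + 1) :=
      calc (k ^ 2)⁻¹ * a ^ (4 * u + 2) * k ^ 2
        _ = k⁻¹ * (k⁻¹ * a ^ (4 * u + 2) * k) * k := by simp only [sq]; group
        _ = (a ^ (4 * u + 2)) ^ (4 * (4 * u ^ 2 + 2 * u) + 1) := by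
          rw [hconj, hconj, ← zpow_mul]; ring_nf
    obtain ⟨s, hs, hsn⟩ := ih hconj_sq
    refine ⟨(2 * u + 1) * s, (odd_two_mul_add_one u).mul hs, ?_⟩
    rw [pow_succ', pow_mul, hsq, hsn, pow_mul]
    congr 1
    simp only [← zpow_natCast, ← zpow_mul]
    push_cast
    ring_nf

namespace QuaternionConfig

variable {t z i j : G}

lemma centralInvolutions_le_commuteModSubgroup (a b : G) :
    centralInvolutions G ≤ commuteModSubgroup t a b := fun _ hw ↦
  ⟨.of_commute (commute_of_mem_centralInvolutions hw a),
    .of_commute (commute_of_mem_centralInvolutions hw b)⟩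

lemma sq_mem_commuteModSubgroup (C : QuaternionConfig t z i j) (g : G) :
    g ^ 2 ∈ commuteModSubgroup t i j :=
  ⟨.of_commute (C.commute_sq C.left_pow_four g), .of_commute (C.commute_sq C.right_pow_four g)⟩

lemma sq_ne_of_commute (C : QuaternionConfig t z i j) {c : G} (hi : Commute c i)
    (hj : Commute c j) : c ^ 2 ≠ t := fun hc ↦ by
  have hci : c * i ∈ centralInvolutions G := C.mem_of_sq_eq_one <| by
    rw [hi.mul_pow, hc, C.pair.left_sq, mul_self_of_mem_centralInvolutions C.t_mem]
  have hij := hj.inv_left.mul_left (commute_of_mem_centralInvolutions hci j)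
  rw [inv_mul_cancel_left] at hij
  exact C.not_commute hij

lemma sq_eq_or_sq_eq_of_commute (C : QuaternionConfig t z i j) {c : G} (hi : Commute c i)
    (hj : Commute c j) (hc : c ∉ centralInvolutions G) (hc2 : c ^ 2 ∈ centralInvolutions G) :
    c ^ 2 = z ∨ c ^ 2 = t * z :=
  ((C.eq_of_sq_eq_one _ hc2.2).resolve_left fun h ↦ hc (C.mem_of_sq_eq_one h)).resolve_left
    (C.sq_ne_of_commute hi hj)

lemma inv_mul_sq_mem (C : QuaternionConfig t z i j) {x y : G}
    (hx : x ^ 2 ∉ centralInvolutions G) (hx' : (x ^ 2) ^ 2 ∈ centralInvolutions G)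
    (hy : y ^ 2 ∉ centralInvolutions G) (hy' : (y ^ 2) ^ 2 ∈ centralInvolutions G) :
    (x ^ 2)⁻¹ * y ^ 2 ∈ centralInvolutions G := by
  have hxi := C.commute_sq C.left_pow_four x
  have hxj := C.commute_sq C.right_pow_four x
  have hyi := C.commute_sq C.left_pow_four y
  have hyj := C.commute_sq C.right_pow_four y
  have hxy : Commute (x ^ 2) (y ^ 2) :=
    C.commute_sq (pow_four_eq_one_of_sq_mem_centralInvolutions hy') x
  suffices h : (x ^ 2) ^ 2 = (y ^ 2) ^ 2 from
    C.mem_of_sq_eq_one (by rw [hxy.inv_left.mul_pow, inv_pow, h, inv_mul_cancel])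
  have hne := hxy.mul_pow 2 ▸ C.sq_ne_of_commute (hxi.mul_left hyi) (hxj.mul_left hyj)
  obtain hx | hx := C.sq_eq_or_sq_eq_of_commute hxi hxj hx hx' <;>
    obtain hy | hy := C.sq_eq_or_sq_eq_of_commute hyi hyj hy hy' <;> rw [hx, hy] at hne ⊢
  · exact absurd (mul_mul_cancel_of_mem_centralInvolutions C.z_mem t) hne
  · rw [mul_assoc, mul_self_of_mem_centralInvolutions C.z_mem, mul_one] at hne
    exact absurd rfl hne

lemma mul_pow_four (C : QuaternionConfig t z i j) {x y : G} (hx : x ^ 4 = 1) (hy : y ^ 4 = 1) :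
    (x * y) ^ 4 = 1 := by
  obtain ⟨e, he⟩ := C.exists_commuteUpTo hy x
  refine pow_four_eq_one_of_sq_mem_centralInvolutions ?_
  rw [he.sq_mul]
  exact mul_mem he.mem
    (mul_mem (C.sq_mem_of_pow_four_eq_one hx) (C.sq_mem_of_pow_four_eq_one hy))

lemma exists_commute_left (C : QuaternionConfig t z i j) {y : G} (hy : y ^ 4 = 1)
    (hi : CommuteMod t y i) (hj : ¬ CommuteMod t y j) :
    ∃ y', y' ^ 4 = 1 ∧ Commute y' i ∧ ¬ CommuteMod t y' j := by
  obtain ⟨e, he, hyi⟩ := hi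
  obtain rfl | rfl := eq_one_or_eq_of_mem_zpowers C.t_mem.2 he
  · exact ⟨y, hy, hyi.commute, hj⟩
  · exact ⟨y * j, C.mul_pow_four hy C.right_pow_four,
      (hyi.mul_left C.pair.symm.commuteUpTo).commute_of_eq_one
        (mul_self_of_mem_centralInvolutions C.t_mem),
      mt (CommuteMod.of_commute (.refl j)).mul_left_iff.1 hj⟩

lemma exists_sq_eq_of_commuteMod (C : QuaternionConfig t z i j) {y u : G} (hy : y ^ 4 = 1)
    (hi : CommuteMod t y i) (hj : ¬ CommuteMod t y j) (hu : u ^ 2 = 1)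
    (hu1 : u ≠ 1) (hut : u ≠ t) : ∃ y', ¬ CommuteMod t y' j ∧ y' ^ 2 = u := by
  obtain ⟨y, hy, hi, hj⟩ := C.exists_commute_left hy hi hj
  have hne_one {w : G} (hw : ¬ CommuteMod t w j) : w ^ 2 ≠ 1 := fun h ↦
    hw (.of_commute (commute_of_mem_centralInvolutions (C.mem_of_sq_eq_one h) j))
  have hyij : ¬ CommuteMod t (y * i) j :=
    mt (CommuteMod.mul_left_iff ⟨t, mem_zpowers t, C.pair.commuteUpTo⟩).1 hj
  have hsq : (y * i) ^ 2 = y ^ 2 * t := by rw [hi.mul_pow, C.pair.left_sq]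
  have htt := mul_self_of_mem_centralInvolutions C.t_mem
  have hyt : y ^ 2 ≠ t := fun h ↦ hne_one hyij (by rw [hsq, h, htt])
  have hy2 := ((C.eq_of_sq_eq_one (y ^ 2) (C.sq_mem_of_pow_four_eq_one hy).2).resolve_left
    (hne_one hj)).resolve_left hyt
  have hyi2 : (y * i) ^ 2 = t * y ^ 2 :=
    hsq.trans (commute_of_mem_centralInvolutions C.t_mem (y ^ 2)).eq.symm
  by_cases hyu : y ^ 2 = u
  · exact ⟨y, hj, hyu⟩
  · refine ⟨y * i, hyij, ?_⟩
    obtain rfl | rfl := ((C.eq_of_sq_eq_one u hu).resolve_left hu1).resolve_left hut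
    · rw [hyi2, hy2.resolve_left hyu, ← mul_assoc, htt, one_mul]
    · rw [hyi2, hy2.resolve_right hyu]

lemma exists_sq_eq (C : QuaternionConfig t z i j) {y u : G} (hy : y ^ 4 = 1)
    (hyP : y ∉ commuteModSubgroup t i j) (hu : u ^ 2 = 1) (hu1 : u ≠ 1) (hut : u ≠ t) :
    ∃ y' ∉ commuteModSubgroup t i j, y' ^ 2 = u := by
  by_cases hi : CommuteMod t y i
  · obtain ⟨y', hy', h⟩ := C.exists_sq_eq_of_commuteMod hy hi (fun hj ↦ hyP ⟨hi, hj⟩) hu hu1 hut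
    exact ⟨y', fun h ↦ hy' h.2, h⟩
  · obtain ⟨y', hy', h⟩ : ∃ y', ¬ CommuteMod t y' i ∧ y' ^ 2 = u := by
      by_cases hj : CommuteMod t y j
      · exact C.swap.exists_sq_eq_of_commuteMod hy hj hi hu hu1 hut
      · exact C.mul_left.exists_sq_eq_of_commuteMod hy
          (C.commuteMod_mul_right C.left_pow_four C.right_pow_four hi hj) hi hu hu1 hut
    exact ⟨y', fun h ↦ hy' h.1, h⟩

lemma sq_notMem_of_notMem (C : QuaternionConfig t z i j) {x y : G}
    (hx : x ^ 2 ∉ centralInvolutions G) (hx' : (x ^ 2) ^ 2 ∈ centralInvolutions G)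
    (hy : y ∉ commuteModSubgroup t i j) : y ^ 2 ∉ centralInvolutions G := fun hy2 ↦ by
  obtain ⟨y', hy', hsq⟩ := C.exists_sq_eq
    (pow_four_eq_one_of_sq_mem_centralInvolutions hy2) hy hx'.2 (fun h ↦ hx (C.mem_of_sq_eq_one h))
    (C.sq_ne_of_commute (C.commute_sq C.left_pow_four x) (C.commute_sq C.right_pow_four x))
  have hxy : Commute (x ^ 2) y' :=
    C.commute_sq (pow_four_eq_one_of_sq_mem_centralInvolutions (hsq ▸ hx')) x
  have hmem : (x ^ 2)⁻¹ * y' ∈ centralInvolutions G :=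
    C.mem_of_sq_eq_one (by rw [hxy.inv_left.mul_pow, inv_pow, hsq, inv_mul_cancel])
  refine hy' ((mul_mem_cancel_left (inv_mem (C.sq_mem_commuteModSubgroup x))).1 ?_)
  exact centralInvolutions_le_commuteModSubgroup i j hmem

lemma exists_conj_eq_mul_zpow (C : QuaternionConfig t z i j) {k a : G} {n : ℕ}
    (ha : a ^ 2 ^ (n + 1) ∉ centralInvolutions G)
    (ha' : (a ^ 2 ^ (n + 1)) ^ 2 ∈ centralInvolutions G) (hk : Commute k (a ^ 2 ^ (n + 1))) :
    ∃ e ∈ centralInvolutions G, ∃ u : ℤ, k⁻¹ * a * k = e * a ^ (4 * u + 1) := by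
  obtain ⟨e, he, r, hr⟩ := C.exists_conj_eq a k⁻¹
  rw [inv_inv] at hr
  set c := a ^ 2 ^ (n + 1) with hc
  have he_pow : e ^ 2 ^ (n + 1) = 1 := by rw [pow_succ', pow_mul, he.2, one_pow]
  have hcr : c ^ r = c := calc
    c ^ r = (k⁻¹ * a * k) ^ 2 ^ (n + 1) := by
      rw [hr, (commute_of_mem_centralInvolutions he _).mul_pow, he_pow, one_mul, hc,
        ← zpow_natCast, ← zpow_natCast, zpow_comm]
    _ = k⁻¹ * c * k := by simpa using conj_pow (i := 2 ^ (n + 1)) (a := k⁻¹) (b := a)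
    _ = c := by rw [mul_assoc, ← hk.eq, inv_mul_cancel_left]
  have horder : orderOf c = 4 := orderOf_eq_prime_pow (p := 2) (n := 1)
    (fun h ↦ ha (C.mem_of_sq_eq_one h)) (pow_four_eq_one_of_sq_mem_centralInvolutions ha')
  obtain ⟨u, hu⟩ : (4 : ℤ) ∣ r - 1 := by
    rw [show (4 : ℤ) = (orderOf c : ℤ) by rw [horder]; rfl, orderOf_dvd_iff_zpow_eq_one,
      zpow_sub_one, hcr, mul_inv_cancel]
  exact ⟨e, he, u, by rw [hr, ← hu, sub_add_cancel]⟩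

lemma exists_notMem_and_mul_notMem (C : QuaternionConfig t z i j) (k : G) :
    ∃ h ∉ commuteModSubgroup t i j, k * h ∉ commuteModSubgroup t i j := by
  obtain ⟨h, hhi, hhj⟩ := C.exists_commute_and_commuteUpTo
  obtain ⟨h', -, hhi'⟩ := C.swap.exists_commute_and_commuteUpTo
  have hh : h ∉ commuteModSubgroup t i j := fun hP ↦ C.not_commuteMod hhj hP.2
  by_cases hkh : k * h ∈ commuteModSubgroup t i j
  · refine ⟨h', fun hP ↦ C.not_commuteMod hhi' hP.1, fun hkh' ↦ C.not_commuteMod hhi' ?_⟩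
    have hmem := (mul_mem (inv_mem hkh) hkh').1
    rw [mul_inv_rev, mul_assoc, inv_mul_cancel_left] at hmem
    simpa only [mul_inv_cancel_left] using (CommuteMod.of_commute hhi).mul_left hmem
  · exact ⟨h, hh, hkh⟩

end QuaternionConfig

lemma mul_pow_mem_of_conj_eq {k a e : G} {u : ℤ} {n : ℕ} (he : e ∈ centralInvolutions G)
    (hconj : k⁻¹ * a * k = e * a ^ (4 * u + 1)) (ha : (a ^ 2 ^ n) ^ 2 ∈ centralInvolutions G)
    (hka : (k ^ 2 ^ n)⁻¹ * a ^ 2 ^ n ∈ centralInvolutions G) :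
    (k * a) ^ 2 ^ n ∈ centralInvolutions G := by
  rw [← QuotientGroup.eq_one_iff] at he ha ⊢
  have hquot := congrArg (QuotientGroup.mk : G → G ⧸ centralInvolutions G) hconj
  simp only [QuotientGroup.mk_mul, QuotientGroup.mk_inv, QuotientGroup.mk_zpow,
    QuotientGroup.mk_pow, he, one_mul] at hquot ha ⊢
  obtain ⟨s, ⟨m, rfl⟩, hs⟩ := exists_odd_mul_pow_two_pow_eq hquot n
  rw [hs, zpow_add, zpow_mul, zpow_ofNat, ha, one_zpow, one_mul, zpow_one,
    ← QuotientGroup.mk_pow, ← QuotientGroup.mk_pow, QuotientGroup.eq.2 hka, ← sq]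
  exact ha

namespace QuaternionConfig

variable {t z i j : G}

lemma exists_notMem_pow_mem_of_pow_succ_mem (C : QuaternionConfig t z i j) {k : G} {n : ℕ}
    (hkP : k ∉ commuteModSubgroup t i j) (hk : (k ^ 2 ^ (n + 1)) ^ 2 ∈ centralInvolutions G) :
    ∃ g ∉ commuteModSubgroup t i j, g ^ 2 ^ (n + 1) ∈ centralInvolutions G := by
  by_contra! hmin
  obtain ⟨h, hh, hkh⟩ := C.exists_notMem_and_mul_notMem k
  obtain ⟨d, hd, hd'⟩ := exists_pow_notMem_and_pow_mem C.isPGroup (hmin h hh)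
  rw [pow_right_comm h] at hd hd'
  have hka : k * h ^ 2 ^ d ∉ commuteModSubgroup t i j := by
    obtain _ | d := d
    · rwa [pow_zero, pow_one]
    · rw [pow_succ, pow_mul]
      exact mt (mul_mem_cancel_right (C.sq_mem_commuteModSubgroup _)).1 hkP
  set a := h ^ 2 ^ d
  have hmem : (k ^ 2 ^ (n + 1))⁻¹ * a ^ 2 ^ (n + 1) ∈ centralInvolutions G := by
    have hsq := C.inv_mul_sq_mem (x := k ^ 2 ^ n) (y := a ^ 2 ^ n)
    simp only [← pow_mul (_ : G) (2 ^ n) 2, ← pow_succ] at hsq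
    exact hsq (hmin k hkP) hk hd hd'
  have hcomm : Commute k (a ^ 2 ^ (n + 1)) := by
    simpa using ((Commute.refl k).pow_right (2 ^ (n + 1))).mul_right
      (commute_of_mem_centralInvolutions hmem k).symm
  obtain ⟨e, he, u, hu⟩ := C.exists_conj_eq_mul_zpow hd hd' hcomm
  exact hmin _ hka (mul_pow_mem_of_conj_eq he hu hd' hmem)

lemma exists_notMem_sq_mem (C : QuaternionConfig t z i j) :
    ∃ y ∉ commuteModSubgroup t i j, y ^ 2 ∈ centralInvolutions G := by
  have hdescent (n : ℕ) {k : G} (hkP : k ∉ commuteModSubgroup t i j)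
      (hk : k ^ 2 ^ (n + 1) ∈ centralInvolutions G) :
      ∃ y ∉ commuteModSubgroup t i j, y ^ 2 ∈ centralInvolutions G := by
    induction n generalizing k with
    | zero => exact ⟨k, hkP, hk⟩
    | succ n ih =>
      rw [pow_succ, pow_mul] at hk
      obtain ⟨g, hgP, hg⟩ := C.exists_notMem_pow_mem_of_pow_succ_mem hkP hk
      exact ih hgP hg
  obtain ⟨k, hkP, -⟩ := C.exists_notMem_and_mul_notMem 1
  obtain ⟨n, hn⟩ := C.isPGroup k
  exact hdescent n hkP (by rw [pow_succ, pow_mul, hn, one_pow]; exact one_mem _)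

theorem pow_four_eq_one (C : QuaternionConfig t z i j) (g : G) : g ^ 4 = 1 := by
  by_contra hg
  have hg2 : g ^ 2 ∉ centralInvolutions G := fun h ↦
    hg (pow_four_eq_one_of_sq_mem_centralInvolutions h)
  obtain ⟨n, hn, hn'⟩ := exists_pow_notMem_and_pow_mem C.isPGroup hg2
  rw [pow_right_comm g] at hn hn'
  obtain ⟨y, hy, hy2⟩ := C.exists_notMem_sq_mem
  exact C.sq_notMem_of_notMem hn hn' hy hy2

end QuaternionConfig

end ExponentFour

section Isomorphism

variable {G : Type*} [Group G]

namespace QuaternionConfig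

variable {t z i j q x g : G}

lemma sq_mem (C : QuaternionConfig t z i j) (g : G) : g ^ 2 ∈ centralInvolutions G :=
  C.sq_mem_of_pow_four_eq_one (C.pow_four_eq_one g)

lemma sq_eq_of_commute_of_commuteUpTo (C : QuaternionConfig t z i j)
    (hpair : IsQuaternionPair t q x) (hq : Commute g q) (hx : CommuteUpTo z g x) : g ^ 2 = z := by
  have hgx : ¬ Commute g x := hx.ne_one_iff.1 C.z_ne_one
  obtain hg | hg | hg | hg := C.eq_of_sq_eq_one _ (C.sq_mem g).2
  · exact absurd (commute_of_mem_centralInvolutions (C.mem_of_sq_eq_one hg) x) hgx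
  · have hgq : g * q ∈ centralInvolutions G := C.mem_of_sq_eq_one <| by
      rw [hq.mul_pow, hg, hpair.left_sq, mul_self_of_mem_centralInvolutions C.t_mem]
    have hzt := (hx.mul_left hpair.commuteUpTo).unique
      (.of_commute (commute_of_mem_centralInvolutions hgq x))
    exact absurd (mul_right_cancel
      (hzt.trans (mul_self_of_mem_centralInvolutions C.t_mem).symm)) C.z_ne_t
  · exact hg
  · have hgxmem : g * x ∈ centralInvolutions G := C.mem_of_sq_eq_one <| by
      rw [hx.sq_mul, hg, hpair.right_sq, mul_assoc,
        mul_mul_cancel_of_mem_centralInvolutions C.t_mem,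
        mul_self_of_mem_centralInvolutions C.z_mem]
    have hxx := (commute_of_mem_centralInvolutions hgxmem x).mul_left (Commute.refl x).inv_left
    rw [mul_inv_cancel_right] at hxx
    exact absurd hxx hgx

lemma mul_sq_eq_one_of_commute (C : QuaternionConfig t z i j) (hpair : IsQuaternionPair t q x)
    (hq : Commute g q) (hx : CommuteUpTo z g x) {c e : G} (hcq : Commute c q) (hcx : Commute c x)
    (he : CommuteUpTo e g c) : e * c ^ 2 = 1 := by
  have hgc := C.sq_eq_of_commute_of_commuteUpTo hpair (hq.mul_left hcq)
    (by simpa only [mul_one] using hx.mul_left (.of_commute hcx))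
  rw [he.sq_mul, C.sq_eq_of_commute_of_commuteUpTo hpair hq hx, ← mul_assoc,
    (commute_of_mem_centralInvolutions he.mem z).eq, mul_assoc, mul_eq_left] at hgc
  exact hgc

end QuaternionConfig

/-- `h` and `k` act on `i` and `j` as the dual basis does modulo `⟨z⟩`: each of them commutes with
one of the two and has commutator `z` with the other. -/
structure IsDualPair (z i j h k : G) : Prop where
  left_left : Commute h i
  left_right : CommuteUpTo z h j
  right_left : CommuteUpTo z k i
  right_right : Commute k j

namespace IsDualPair

variable {t z i j h k : G}

lemma symm (D : IsDualPair z i j h k) : IsDualPair z j i k h :=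
  ⟨D.right_right, D.right_left, D.left_right, D.left_left⟩

lemma mul_commute_mul (D : IsDualPair z i j h k) :
    Commute (h * k) (i * j) := by
  have hi := (CommuteUpTo.of_commute D.left_left).mul_left D.right_left
  have hj := D.left_right.mul_left (.of_commute D.right_right)
  rw [one_mul] at hi
  rw [mul_one] at hj
  exact (hi.mul_right hj).commute_of_eq_one (mul_self_of_mem_centralInvolutions hi.mem)

lemma mul_commuteUpTo (D : IsDualPair z i j h k) : CommuteUpTo z (h * k) i := by
  simpa only [one_mul] using (CommuteUpTo.of_commute D.left_left).mul_left D.right_left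

end IsDualPair

namespace QuaternionConfig

variable {t z i j h k : G}

lemma exists_isDualPair (C : QuaternionConfig t z i j) : ∃ h k, IsDualPair z i j h k :=
  let ⟨h, hi, hj⟩ := C.exists_commute_and_commuteUpTo
  let ⟨k, hj', hi'⟩ := C.swap.exists_commute_and_commuteUpTo
  ⟨h, k, hi, hj, hi', hj'⟩

lemma isQuaternionPair_of_isDualPair (C : QuaternionConfig t z i j)
    (D : IsDualPair z i j h k) : IsQuaternionPair z h k := by
  obtain ⟨e, he⟩ := C.exists_commuteUpTo (C.pow_four_eq_one k) h
  have hh := C.sq_eq_of_commute_of_commuteUpTo C.pair D.left_left D.left_right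
  have hk := C.sq_eq_of_commute_of_commuteUpTo C.pair.symm D.right_right D.right_left
  have hhk := C.sq_eq_of_commute_of_commuteUpTo C.pair.mul_left D.mul_commute_mul D.mul_commuteUpTo
  rw [he.sq_mul, hh, hk, mul_self_of_mem_centralInvolutions C.z_mem, mul_one] at hhk
  exact ⟨hh, hk, hhk ▸ he⟩

lemma sq_eq_one_of_commute (C : QuaternionConfig t z i j) {c : G} (hi : Commute c i)
    (hj : Commute c j) : c ^ 2 = 1 := by
  obtain ⟨h, k, D⟩ := C.exists_isDualPair
  obtain ⟨e, he⟩ := C.exists_commuteUpTo (C.pow_four_eq_one c) h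
  obtain ⟨f, hf⟩ := C.exists_commuteUpTo (C.pow_four_eq_one c) k
  have hce := C.mul_sq_eq_one_of_commute C.pair D.left_left D.left_right hi hj he
  have hcf := C.mul_sq_eq_one_of_commute C.pair.symm D.right_right D.right_left hj hi hf
  have hcef := C.mul_sq_eq_one_of_commute C.pair.mul_left D.mul_commute_mul D.mul_commuteUpTo
    (hi.mul_right hj) hi (he.mul_left hf)
  rwa [mul_assoc, hcf, mul_one, ← mul_right_cancel_iff (a := c ^ 2), hce, one_mul, eq_comm] at hcef

lemma exists_mem_closure_mul_mem (C : QuaternionConfig t z i j) (D : IsDualPair z i j h k)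
    (g : G) : ∃ p ∈ closure {h, k}, g * p ∈ commuteModSubgroup t i j := by
  have hh : h ∈ closure {h, k} := subset_closure (by simp)
  have hk : k ∈ closure {h, k} := subset_closure (by simp)
  obtain ⟨p, hp, hi⟩ : ∃ p ∈ closure {h, k}, CommuteMod t (g * p) i := by
    by_cases hi : CommuteMod t g i
    · exact ⟨1, one_mem _, by rwa [mul_one]⟩
    · exact ⟨k, hk, C.commuteMod_mul C.left_pow_four hi (C.not_commuteMod D.right_left)⟩
  by_cases hj : CommuteMod t (g * p) j
  · exact ⟨p, hp, hi, hj⟩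
  · refine ⟨p * h, mul_mem hp hh, ?_⟩
    rw [← mul_assoc]
    exact ⟨hi.mul_left (.of_commute D.left_left),
      C.commuteMod_mul C.right_pow_four hj (C.not_commuteMod D.left_right)⟩

lemma mem_of_sq_eq_one_of_mem (C : QuaternionConfig t z i j) {H : Subgroup G} (ht : t ∈ H)
    (hz : z ∈ H) {w : G} (hw : w ^ 2 = 1) : w ∈ H := by
  obtain rfl | rfl | rfl | rfl := C.eq_of_sq_eq_one w hw
  exacts [one_mem H, ht, hz, mul_mem ht hz]

lemma eq_top_of_isDualPair (C : QuaternionConfig t z i j) (D : IsDualPair z i j h k)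
    {H : Subgroup G} (hi : i ∈ H) (hj : j ∈ H) (hh : h ∈ H) (hk : k ∈ H) : H = ⊤ := by
  have ht : t ∈ H := C.pair.left_sq ▸ pow_mem hi 2
  have hz : z ∈ H := (C.isQuaternionPair_of_isDualPair D).left_sq ▸ pow_mem hh 2
  refine (eq_top_iff' H).2 fun g ↦ ?_
  obtain ⟨p, hp, hgp⟩ := C.exists_mem_closure_mul_mem D g
  obtain ⟨q, hq, hqi, hqj⟩ := C.pair.exists_commute_mul hgp.1 hgp.2
  have hpH : p ∈ H := (closure_le H).2 (Set.pair_subset hh hk) hp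
  have hqH : q ∈ H := (closure_le H).2 (Set.pair_subset hi hj) hq
  rw [← mul_mem_cancel_right hpH, ← mul_mem_cancel_right hqH]
  exact C.mem_of_sq_eq_one_of_mem ht hz (C.sq_eq_one_of_commute hqi hqj)

lemma isQuaternionPair_mul (C : QuaternionConfig t z i j) (D : IsDualPair z i j h k) :
    IsQuaternionPair (t * z) (i * h) (j * k) where
  left_sq := by
    rw [D.left_left.symm.mul_pow, C.pair.left_sq, (C.isQuaternionPair_of_isDualPair D).left_sq]
  right_sq := by
    rw [D.right_right.symm.mul_pow, C.pair.right_sq,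
      (C.isQuaternionPair_of_isDualPair D).right_sq]
  commuteUpTo := by
    have hi := C.pair.commuteUpTo.mul_right D.right_left.symm
    have hh := D.left_right.mul_right (C.isQuaternionPair_of_isDualPair D).commuteUpTo
    rw [mul_self_of_mem_centralInvolutions C.z_mem] at hh
    simpa only [mul_one] using hi.mul_left hh

lemma commute_mul_of_isDualPair (C : QuaternionConfig t z i j) (D : IsDualPair z i j h k) :
    Commute h (j * k) :=
  (D.left_right.mul_right (C.isQuaternionPair_of_isDualPair D).commuteUpTo).commute_of_eq_one
    (mul_self_of_mem_centralInvolutions C.z_mem)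

end QuaternionConfig

end Isomorphism

section QuaternionProduct

variable {G : Type*} [Group G]

namespace IsQuaternionPair

variable {u a b : G}

lemma pow_mul_eq (h : IsQuaternionPair u a b) (n : ℕ) :
    a ^ n * b = b * a ^ (3 * n) := by
  have hab : SemiconjBy b (a ^ 3) a := by
    rw [SemiconjBy, h.commuteUpTo.eq, pow_succ, h.left_sq, ← mul_assoc, ← mul_assoc,
      (commute_of_mem_centralInvolutions h.mem b).eq]
  rw [pow_mul]
  exact (hab.pow_right n).eq.symm

lemma pow_eq_pow (h : IsQuaternionPair u a b) {m n : ℕ} (hmn : m ≡ n [MOD 4]) :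
    a ^ m = a ^ n :=
  pow_eq_pow_of_modEq hmn (pow_four_eq_one_of_sq_mem_centralInvolutions (h.left_sq ▸ h.mem))

/-- The homomorphism `Q₈ → G` sending the standard generators to a quaternion pair in `G`. -/
def hom (h : IsQuaternionPair u a b) : QuaternionGroup 2 →* G :=
  MonoidHom.mk'
    (fun
      | .a n => a ^ n.val
      | .xa n => b * a ^ n.val) <| by
    rintro (m | m) (n | n)
    · rw [QuaternionGroup.a_mul_a, ← pow_add]
      exact h.pow_eq_pow (by revert m n; decide)
    · rw [QuaternionGroup.a_mul_xa, ← mul_assoc, h.pow_mul_eq, mul_assoc, ← pow_add]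
      exact congrArg (b * ·) (h.pow_eq_pow (by revert m n; decide))
    · rw [QuaternionGroup.xa_mul_a, mul_assoc, ← pow_add]
      exact congrArg (b * ·) (h.pow_eq_pow (by revert m n; decide))
    · rw [QuaternionGroup.xa_mul_xa, mul_assoc, ← mul_assoc (a ^ _), h.pow_mul_eq, mul_assoc,
        ← pow_add, ← mul_assoc, ← sq b, h.right_sq, ← h.left_sq, ← pow_add]
      exact h.pow_eq_pow (by revert m n; decide)

lemma hom_a_one (h : IsQuaternionPair u a b) : h.hom (.a 1) = a :=
  pow_one a

lemma hom_xa_zero (h : IsQuaternionPair u a b) : h.hom (.xa 0) = b :=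
  (congrArg (b * ·) (pow_zero a)).trans (mul_one b)

lemma hom_a_two (h : IsQuaternionPair u a b) : h.hom (.a 2) = u :=
  h.left_sq

lemma commute_hom (h : IsQuaternionPair u a b) {x : G} (ha : Commute a x) (hb : Commute b x) :
    ∀ q, Commute (h.hom q) x
  | .a n => ha.pow_left n.val
  | .xa n => hb.mul_left (ha.pow_left n.val)

end IsQuaternionPair

lemma exists_pow_eq_involution_of_quaternionGroup_prod :
    ∀ p : QuaternionGroup 2 × QuaternionGroup 2, p ≠ 1 →
      ∃ n : Fin 3, p ^ n.val = (.a 2, 1) ∨ p ^ n.val = (1, .a 2) ∨ p ^ n.val = (.a 2, .a 2) := by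
  decide

lemma injective_of_quaternionGroup_prod {f : QuaternionGroup 2 × QuaternionGroup 2 →* G}
    (hl : f (.a 2, 1) ≠ 1) (hr : f (1, .a 2) ≠ 1) (hlr : f (.a 2, .a 2) ≠ 1) :
    Function.Injective f := by
  refine (injective_iff_map_eq_one f).2 fun p hp ↦ ?_
  by_contra hp1
  obtain ⟨n, hn⟩ := exists_pow_eq_involution_of_quaternionGroup_prod p hp1
  have hpn : f (p ^ n.val) = 1 := by rw [map_pow, hp, one_pow]
  obtain hn | hn | hn := hn <;> rw [hn] at hpn
  exacts [hl hpn, hr hpn, hlr hpn]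

lemma IsQuaternionPair.nonempty_mulEquiv {u v a b c d : G} (P : IsQuaternionPair u a b)
    (Q : IsQuaternionPair v c d) (hac : Commute a c) (had : Commute a d) (hbc : Commute b c)
    (hbd : Commute b d) (hu : u ≠ 1) (hv : v ≠ 1) (huv : u * v ≠ 1)
    (hclosure : closure {a, b, c, d} = ⊤) :
    Nonempty (G ≃* QuaternionGroup 2 × QuaternionGroup 2) := by
  have hcomm (p q : QuaternionGroup 2) : Commute (P.hom p) (Q.hom q) :=
    P.commute_hom (Q.commute_hom hac.symm had.symm q).symm
      (Q.commute_hom hbc.symm hbd.symm q).symm p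
  let F := P.hom.noncommCoprod Q.hom hcomm
  have hF (p q : QuaternionGroup 2) : F (p, q) = P.hom p * Q.hom q := rfl
  have hinj : Function.Injective F := by
    apply injective_of_quaternionGroup_prod
    · rwa [hF, P.hom_a_two, map_one, mul_one]
    · rwa [hF, Q.hom_a_two, map_one, one_mul]
    · rwa [hF, P.hom_a_two, Q.hom_a_two]
  have hsurj : Function.Surjective F := by
    rw [← MonoidHom.range_eq_top, eq_top_iff, ← hclosure, closure_le]
    rintro x (rfl | rfl | rfl | rfl)
    · exact ⟨(.a 1, 1), by rw [hF, P.hom_a_one, map_one, mul_one]⟩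
    · exact ⟨(.xa 0, 1), by rw [hF, P.hom_xa_zero, map_one, mul_one]⟩
    · exact ⟨(1, .a 1), by rw [hF, Q.hom_a_one, map_one, one_mul]⟩
    · exact ⟨(1, .xa 0), by rw [hF, Q.hom_xa_zero, map_one, one_mul]⟩
  exact ⟨(MulEquiv.ofBijective F ⟨hinj, hsurj⟩).symm⟩

theorem QuaternionConfig.nonempty_mulEquiv {t z i j : G} (C : QuaternionConfig t z i j) :
    Nonempty (G ≃* QuaternionGroup 2 × QuaternionGroup 2) := by
  obtain ⟨h, k, D⟩ := C.exists_isDualPair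
  refine (C.isQuaternionPair_of_isDualPair D).nonempty_mulEquiv (C.isQuaternionPair_mul D)
    (D.left_left.mul_right (.refl h)) (C.commute_mul_of_isDualPair D)
    (C.swap.commute_mul_of_isDualPair D.symm) (D.right_right.mul_right (.refl k)) C.z_ne_one
    (fun htz ↦ C.z_ne_t (mul_right_cancel
      ((mul_self_of_mem_centralInvolutions C.z_mem).trans htz.symm))) ?_ ?_
  · rw [mul_mul_cancel_of_mem_centralInvolutions C.z_mem]
    exact C.t_ne_one
  · have hh : h ∈ closure {h, k, i * h, j * k} := subset_closure (by simp)
    have hk : k ∈ closure {h, k, i * h, j * k} := subset_closure (by simp)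
    exact C.eq_top_of_isDualPair D ((mul_mem_cancel_right hh).1 (subset_closure (by simp)))
      ((mul_mem_cancel_right hk).1 (subset_closure (by simp))) hh hk

lemma quaternionGroup_commute_of_sq_eq_one :
    ∀ p : QuaternionGroup 2, p ^ 2 = 1 → ∀ q, p * q = q * p := by
  decide

lemma mem_center_of_mulEquiv_quaternionGroup_prod
    (φ : G ≃* QuaternionGroup 2 × QuaternionGroup 2) {g : G} (hg : g ^ 2 = 1) :
    g ∈ Subgroup.center G := by
  have hφ : φ g ^ 2 = 1 := by rw [← map_pow, hg, map_one]
  refine Subgroup.mem_center_iff.2 fun x ↦ φ.injective ?_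
  rw [map_mul, map_mul]
  exact Prod.ext (quaternionGroup_commute_of_sq_eq_one _ (congrArg Prod.fst hφ) _).symm
    (quaternionGroup_commute_of_sq_eq_one _ (congrArg Prod.snd hφ) _).symm

end QuaternionProduct

/-- Let `G` be a finite `2`-group with SN but not SSN.  Then every element of order `2` in
`G` is central if and only if `G ≅ Q₈ × Q₈`. -/
theorem stmt_7 (G : Type) [Group G] [Finite G] (h2 : IsPGroup 2 G)
    (hSN : HasSN G) (hnSSN : ¬ HasSSN G) :
    (∀ g : G, orderOf g = 2 → g ∈ Subgroup.center G) ↔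
      Nonempty (G ≃* (QuaternionGroup 2 × QuaternionGroup 2)) := by
  constructor
  · intro hcentral
    have hΩ (w : G) (hw : w ^ 2 = 1) : w ∈ centralInvolutions G := by
      refine ⟨?_, hw⟩
      obtain rfl | hw1 := eq_or_ne w 1
      · exact one_mem _
      · exact hcentral w (orderOf_eq_prime hw hw1)
    obtain ⟨t, z, i, j, C⟩ := exists_quaternionConfig h2 hSN hΩ hnSSN
    exact C.nonempty_mulEquiv
  · rintro ⟨φ⟩ g hg
    exact mem_center_of_mulEquiv_quaternionGroup_prod φ (hg ▸ pow_orderOf_eq_one g)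
end
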